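/- arXiv:1712.01167 — 3 statements merged into one kernel-verified Lean document; each statement's English description precedes it below -/
import Mathlib

section
/- Let k be an algebraically closed field of characteristic p > 0, let n ≥ 1 and m ≥ 2 be integers with p dividing m, and let F ∈ k[x₀,…,x_n] be homogeneous of degree m such that the hypersurface V(F) is smooth (the only common zero in k^{n+1} of F, ∂₀F, …, ∂ₙF is the origin). Let I = (∂₀F, …, ∂ₙF) be the ideal generated by the n+1 partial derivatives of F. Then for all sufficiently large d, the k-dimension of the degree-d homogeneous component of the graded ring k[x₀,…,x_n]/I equals ((m−1)^{n+1} − (−1)^{n+1})/m. (The critical scheme of a smooth degree-m hypersurface in ℙⁿ in characteristic dividing m is 0-dimensional of degree J_m(n) = ((m−1)^{n+1} − (−1)^{n+1})/m.) -/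
open MvPolynomial

/-!
Since `p ∣ m`, Euler's formula reads `∑ xᵢ ∂ᵢF = 0`. The partials generate an irrelevant ideal
modulo `F`, hence have depth at least `n`. After a general change of coordinates the last `n`
partials `f₁, …, fₙ` of `F` form a regular sequence, so that `B = (f₁, …, fₙ)` defines a complete
intersection of degree `(m - 1)ⁿ`. As `x₀ f₀ ∈ B`, the scheme of `B` is the union of the critical
scheme `B + (f₀)` and of the scheme `B + (x₀)`. For general `x₀` these are disjoint, and the second
one is given by `n` forms of degree `m - 1` on the hyperplane `x₀ = 0` which again satisfy
`∑_{i ≥ 1} xᵢ fᵢ = 0`. Hence `J(n) = (m - 1)ⁿ - J(n - 1)`, starting from `J(0) = 1`.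
-/

namespace CriticalScheme

open Filter RingTheory.Sequence
open scoped Pointwise

attribute [local instance] MvPolynomial.gradedAlgebra

section RegularElement

variable {S : Type*} [CommRing S] {K : Ideal S} {a c f : S}

theorem isSMulRegular_quotient_iff :
    IsSMulRegular (S ⧸ K) a ↔ ∀ s, a * s ∈ K → s ∈ K :=
  isSMulRegular_quotient_iff_mem_of_smul_mem K a

theorem mem_sup_span_singleton {s : S} : s ∈ K ⊔ Ideal.span {a} ↔ ∃ t, s - a * t ∈ K := by
  rw [sup_comm, Ideal.mem_span_singleton_sup]
  constructor
  · rintro ⟨t, x, hx, rfl⟩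
    exact ⟨t, by rwa [mul_comm t, add_sub_cancel_left]⟩
  · rintro ⟨t, ht⟩
    exact ⟨t, _, ht, by ring⟩

theorem isSMulRegular_sup_span_singleton_swap (ha : IsSMulRegular (S ⧸ K) a)
    (hc : IsSMulRegular (S ⧸ K ⊔ Ideal.span {a}) c) :
    IsSMulRegular (S ⧸ K ⊔ Ideal.span {c}) a := by
  rw [isSMulRegular_quotient_iff] at *
  intro s hs
  obtain ⟨t, hst⟩ := mem_sup_span_singleton.1 hs
  obtain ⟨u, htu⟩ := mem_sup_span_singleton.1 <| hc t <|
    mem_sup_span_singleton.2 ⟨s, by simpa using K.neg_mem hst⟩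
  refine mem_sup_span_singleton.2 ⟨u, ha _ ?_⟩
  convert K.add_mem hst (K.mul_mem_left c htu) using 1
  ring

theorem colon_sup_span_singleton_le {W : Set S} (haW : a ∈ W)
    (ha : IsSMulRegular (S ⧸ K) a) (hf : IsSMulRegular (S ⧸ K) f)
    (hW : (K ⊔ Ideal.span {a}).colon W ≤ K ⊔ Ideal.span {a}) :
    (K ⊔ Ideal.span {f}).colon W ≤ K ⊔ Ideal.span {f} := by
  rw [isSMulRegular_quotient_iff] at ha hf
  intro s hs
  simp only [SetLike.le_def, Submodule.mem_colon, smul_eq_mul] at hs hW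
  obtain ⟨t, hst⟩ := mem_sup_span_singleton.1 (hs a haW)
  have ht : t ∈ K ⊔ Ideal.span {a} := hW fun w hw => by
    obtain ⟨u, hu⟩ := mem_sup_span_singleton.1 (hs w hw)
    refine mem_sup_span_singleton.2 ⟨u, hf _ ?_⟩
    convert K.sub_mem (K.mul_mem_left a hu) (K.mul_mem_left w hst) using 1
    ring
  obtain ⟨u, htu⟩ := mem_sup_span_singleton.1 ht
  refine mem_sup_span_singleton.2 ⟨u, ha _ ?_⟩
  convert K.add_mem hst (K.mul_mem_left f htu) using 1
  ring

theorem colon_le_of_isSMulRegular {W : Set S} (haW : a ∈ W) (ha : IsSMulRegular (S ⧸ K) a) :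
    K.colon W ≤ K := fun s hs =>
  isSMulRegular_quotient_iff.1 ha s (mul_comm s a ▸ Submodule.mem_colon.1 hs a haW)

theorem colon_singleton_eq_of_isSMulRegular (ha : IsSMulRegular (S ⧸ K) a) : K.colon {a} = K :=
  le_antisymm (colon_le_of_isSMulRegular rfl ha) Ideal.le_colon

theorem colon_pow_le {Q : Ideal S} (hQ : K.colon (Q : Set S) ≤ K) (N : ℕ) :
    K.colon ((Q ^ N : Ideal S) : Set S) ≤ K := by
  induction N with
  | zero => simp
  | succ N ih =>
    intro s hs
    refine ih (Submodule.mem_colon.2 fun x hx => hQ (Submodule.mem_colon.2 fun y hy => ?_))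
    rw [smul_assoc]
    exact Submodule.mem_colon.1 hs _ (pow_succ Q N ▸ Ideal.mul_mem_mul hx hy)

theorem exists_eq_colon_of_mem_associatedPrimes [IsNoetherianRing S] {P : Ideal S}
    (hP : P ∈ associatedPrimes S (S ⧸ K)) : ∃ s ∉ K, P = K.colon {s} := by
  obtain ⟨hprime, x, hx⟩ := isAssociatedPrime_iff.1 (AssociatedPrimes.mem_iff.1 hP)
  obtain ⟨s, rfl⟩ := Ideal.Quotient.mk_surjective x
  have hPs : P = K.colon {s} := by
    ext y
    rw [hx, Submodule.mem_colon_singleton, Submodule.mem_colon_singleton, Submodule.mem_bot,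
      ← Ideal.Quotient.eq_zero_iff_mem]
    rfl
  refine ⟨s, fun hs => hprime.ne_top ?_, hPs⟩
  rwa [hPs, Submodule.colon_eq_top_iff_subset, Set.singleton_subset_iff]

theorem isWeaklyRegular_quotient_cons {as : List S} :
    IsWeaklyRegular (S ⧸ K) (a :: as) ↔
      IsSMulRegular (S ⧸ K) a ∧ IsWeaklyRegular (S ⧸ K ⊔ Ideal.span {a}) as := by
  have htop : a • (⊤ : Submodule S (S ⧸ K)) = Submodule.map K.mkQ (Ideal.span {a}) := by
    rw [← Submodule.ideal_span_singleton_smul, ← K.range_mkQ, ← Submodule.map_top,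
      ← Submodule.map_smul'', smul_eq_mul, Ideal.mul_top]
  rw [isWeaklyRegular_cons_iff]
  exact and_congr_right' <| LinearEquiv.isWeaklyRegular_congr
    (Submodule.quotEquivOfEq _ _ htop ≪≫ₗ Submodule.quotientQuotientEquivQuotientSup K _) as

end RegularElement

section Generic

variable {k E : Type*} [Field k] [AddCommGroup E] [Module k E]

/-- The filter of properties of vectors of `E` that hold outside a finite union of proper
subspaces, a linear substitute for "for general `v`". -/
def genericFilter (k E : Type*) [Field k] [AddCommGroup E] [Module k E] : Filter E :=
  Filter.comk (fun A => ∃ T : Set (Submodule k E), T.Finite ∧ ⊤ ∉ T ∧ A ⊆ ⋃ q ∈ T, (q : Set E))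
    ⟨∅, Set.finite_empty, by simp, by simp⟩
    (fun _ ⟨T, hT, hT', hA⟩ _ hB => ⟨T, hT, hT', hB.trans hA⟩)
    (fun _ ⟨T, hT, hT', hA⟩ _ ⟨T', hT₁, hT₁', hB⟩ => ⟨T ∪ T', hT.union hT₁, by simp [*], by
      rw [Set.biUnion_union]; exact Set.union_subset_union hA hB⟩)

theorem eventually_generic_iff {P : E → Prop} : (∀ᶠ v in genericFilter k E, P v) ↔
    ∃ T : Set (Submodule k E), T.Finite ∧ ⊤ ∉ T ∧ ∀ v, (∀ q ∈ T, v ∉ q) → P v := by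
  rw [Filter.Eventually, genericFilter, Filter.mem_comk]
  refine exists_congr fun T => and_congr_right' <| and_congr_right' <| forall_congr' fun v => ?_
  rw [← not_imp_not]
  simp

instance genericFilter_neBot [Infinite k] : (genericFilter k E).NeBot := by
  classical
  refine ⟨fun h => ?_⟩
  obtain ⟨T, hT, hT', hF⟩ := eventually_generic_iff.1 (Filter.eventually_false_iff_eq_bot.2 h)
  apply Subspace.biUnion_ne_univ_of_top_notMem (s := hT.toFinset) (by simpa using hT')
  refine Set.eq_univ_of_forall fun v => ?_
  simpa using hF v

theorem eventually_notMem {q : Submodule k E} (hq : q ≠ ⊤) :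
    ∀ᶠ v in genericFilter k E, v ∉ q :=
  eventually_generic_iff.2 ⟨{q}, Set.finite_singleton q, by simpa using hq.symm, by simp⟩

theorem exists_finite_of_eventually_dual {P : Module.Dual k E → Prop}
    (hP : ∀ᶠ φ in genericFilter k (Module.Dual k E), P φ) [FiniteDimensional k E] :
    ∃ Z : Set E, Z.Finite ∧ 0 ∉ Z ∧ ∀ φ : Module.Dual k E, (∀ z ∈ Z, φ z ≠ 0) → P φ := by
  obtain ⟨T, hT, hT', hTP⟩ := eventually_generic_iff.1 hP
  have hz : ∀ q : Submodule k (Module.Dual k E), ∃ z : E, q ∈ T → z ≠ 0 ∧ ∀ φ ∈ q, φ z = 0 := by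
    intro q
    by_cases hq : q ∈ T
    · have : q.dualCoannihilator ≠ ⊥ := by
        intro h
        have := Subspace.finrank_add_finrank_dualCoannihilator_eq q
        rw [h, finrank_bot, add_zero, ← Subspace.dual_finrank_eq] at this
        exact hT' (Submodule.eq_top_of_finrank_eq this ▸ hq)
      obtain ⟨z, hz, hz0⟩ := Submodule.exists_mem_ne_zero_of_ne_bot this
      exact ⟨z, fun _ => ⟨hz0, by simpa [Submodule.mem_dualCoannihilator] using hz⟩⟩
    · exact ⟨0, by simp [hq]⟩
  choose z hz using hz
  refine ⟨z '' T, hT.image z, ?_, fun φ hφ => hTP φ fun q hq hφq => ?_⟩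
  · rintro ⟨q, hq, h⟩
    exact (hz q hq).1 h
  · exact hφ _ ⟨q, hq, rfl⟩ ((hz q hq).2 φ hφq)

theorem eventually_isSMulRegular {S : Type*} [CommRing S] [Algebra k S] [IsNoetherianRing S]
    (H : E →ₗ[k] S) {K : Ideal S} (hH : K.colon (LinearMap.range H : Set S) ≤ K) :
    ∀ᶠ v in genericFilter k E, IsSMulRegular (S ⧸ K) (H v) := by
  have hproper : ∀ P ∈ associatedPrimes S (S ⧸ K), ∀ᶠ v in genericFilter k E, H v ∉ P := by
    intro P hP
    obtain ⟨s, hs, rfl⟩ := exists_eq_colon_of_mem_associatedPrimes hP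
    refine eventually_notMem (q := ((K.colon {s}).restrictScalars k).comap H) fun htop => hs ?_
    refine hH (Submodule.mem_colon.2 ?_)
    rintro _ ⟨v, rfl⟩
    have hv : v ∈ ((K.colon {s}).restrictScalars k).comap H := htop ▸ Submodule.mem_top
    rw [smul_eq_mul, mul_comm]
    exact Submodule.mem_colon_singleton.1 hv
  filter_upwards [((associatedPrimes.finite S (S ⧸ K)).eventually_all).2 hproper] with v hv
  have : H v ∈ (⋃ P ∈ associatedPrimes S (S ⧸ K), (P : Set S))ᶜ := by simpa using hv
  rwa [biUnion_associatedPrimes_eq_compl_regular, compl_compl] at this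

end Generic

section Depth

variable {k S : Type*} [Field k] [CommRing S] [Algebra k S]
variable {W W' : Submodule k S} {K : Ideal S} {f : S} {r : ℕ}

/-- The `W`-depth of `S ⧸ K` is at least `r`: some weakly regular sequence on `S ⧸ K` of length `r`
has all its entries in the subspace `W`. -/
def DepthGE (W : Submodule k S) (K : Ideal S) (r : ℕ) : Prop :=
  ∃ as : List S, as.length = r ∧ (∀ a ∈ as, a ∈ W) ∧ IsWeaklyRegular (S ⧸ K) as

theorem depthGE_zero : DepthGE W K 0 :=
  ⟨[], rfl, by simp, IsWeaklyRegular.nil S _⟩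

theorem depthGE_succ_iff : DepthGE W K (r + 1) ↔
    ∃ a ∈ W, IsSMulRegular (S ⧸ K) a ∧ DepthGE W (K ⊔ Ideal.span {a}) r := by
  constructor
  · rintro ⟨_ | ⟨a, as⟩, hlen, hW, hreg⟩
    · simp at hlen
    · rw [List.forall_mem_cons] at hW
      rw [isWeaklyRegular_quotient_cons] at hreg
      exact ⟨a, hW.1, hreg.1, as, by simpa using hlen, hW.2, hreg.2⟩
  · rintro ⟨a, haW, ha, as, hlen, hW, hreg⟩
    exact ⟨a :: as, by simp [hlen], List.forall_mem_cons.2 ⟨haW, hW⟩,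
      isWeaklyRegular_quotient_cons.2 ⟨ha, hreg⟩⟩

theorem DepthGE.colon_le (h : DepthGE W K (r + 1)) : K.colon (W : Set S) ≤ K := by
  obtain ⟨a, haW, ha, -⟩ := depthGE_succ_iff.1 h
  exact colon_le_of_isSMulRegular haW ha

variable [IsNoetherianRing S]

theorem eventually_isSMulRegular_coe (hW : K.colon (W : Set S) ≤ K) :
    ∀ᶠ w : W in genericFilter k W, IsSMulRegular (S ⧸ K) (w : S) :=
  eventually_isSMulRegular W.subtype (by rwa [W.range_subtype])

variable [Infinite k]

/-- The auxiliary element `c` is regular modulo both `K + (a)` and `K + (f)`, so that it can be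
exchanged with `a` as well as with `f`. -/
theorem DepthGE.sup_span_singleton : ∀ {r : ℕ} {K : Ideal S} {f : S}, DepthGE W K (r + 1) →
    IsSMulRegular (S ⧸ K) f → DepthGE W (K ⊔ Ideal.span {f}) r
  | 0, _, _, _, _ => depthGE_zero
  | r + 1, K, f, h, hf => by
    obtain ⟨a, haW, ha, hr⟩ := depthGE_succ_iff.1 h
    obtain ⟨⟨c, hcW⟩, hca, hcf⟩ := ((eventually_isSMulRegular_coe hr.colon_le).and
      (eventually_isSMulRegular_coe (colon_sup_span_singleton_le haW ha hf hr.colon_le))).exists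
    have hac : DepthGE W (K ⊔ Ideal.span {c} ⊔ Ideal.span {a}) r :=
      sup_right_comm K _ _ ▸ hr.sup_span_singleton hca
    have hc' : DepthGE W (K ⊔ Ideal.span {c}) (r + 1) :=
      depthGE_succ_iff.2 ⟨a, haW, isSMulRegular_sup_span_singleton_swap ha hca, hac⟩
    have hfc : DepthGE W (K ⊔ Ideal.span {f} ⊔ Ideal.span {c}) r :=
      sup_right_comm K _ _ ▸ hc'.sup_span_singleton (isSMulRegular_sup_span_singleton_swap hf hcf)
    exact depthGE_succ_iff.2 ⟨c, hcW, hcf, hfc⟩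

theorem DepthGE.of_pow_le {N : ℕ} (h : DepthGE W' K r)
    (hpow : Ideal.span (W' : Set S) ^ N ≤ K ⊔ Ideal.span (W : Set S)) : DepthGE W K r := by
  induction r generalizing K with
  | zero => exact depthGE_zero
  | succ r ih =>
    have hcolon : K.colon (W : Set S) ≤ K := by
      intro s hs
      refine colon_pow_le (Ideal.colon_span.trans_le h.colon_le) N
        (Submodule.colon_mono le_rfl hpow (Submodule.mem_colon.2 fun x hx => ?_))
      obtain ⟨y, hy, z, hz, rfl⟩ := Submodule.mem_sup.1 hx
      rw [smul_add]
      exact K.add_mem (K.smul_mem s hy) (Submodule.mem_colon.1 (Ideal.colon_span.ge hs) z hz)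
    obtain ⟨⟨c, hcW⟩, hc⟩ := (eventually_isSMulRegular_coe hcolon).exists
    exact depthGE_succ_iff.2 ⟨c, hcW, hc,
      ih (h.sup_span_singleton hc) (hpow.trans (sup_le_sup_right le_sup_left _))⟩

end Depth

section Selection

theorem notMem_sup_span_singleton_swap {k V : Type*} [Field k] [AddCommGroup V] [Module k V]
    {C : Submodule k V} {x y : V} (hx : x ∉ C) (hy : y ∉ C ⊔ Submodule.span k {x}) :
    x ∉ C ⊔ Submodule.span k {y} := by
  rw [sup_comm, ← C.span_eq, ← Submodule.span_insert] at hy ⊢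
  exact fun hxy => hy (mem_span_insert_exchange hxy (by rwa [C.span_eq]))

theorem sup_span_singleton_ne_top {k V : Type*} [Field k] [AddCommGroup V] [Module k V]
    [FiniteDimensional k V] {C : Submodule k V} (hC : Module.finrank k C + 1 < Module.finrank k V)
    (x : V) : C ⊔ Submodule.span k {x} ≠ ⊤ := by
  intro h
  have hsup := Submodule.finrank_add_le_finrank_add_finrank C (Submodule.span k {x})
  have hx : Module.finrank k (Submodule.span k {x}) ≤ 1 := by
    simpa using finrank_span_le_card (R := k) ({x} : Set V)
  rw [h, finrank_top] at hsup
  omega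

theorem sum_coord_mul_eq {k S V ι κ : Type*} [Field k] [CommRing S] [Algebra k S]
    [AddCommGroup V] [Module k V] [Fintype ι] [Fintype κ]
    (b : Module.Basis ι k V) (β : Module.Basis κ k V) (U : Module.Dual k V →ₗ[k] S)
    (H : V →ₗ[k] S) : ∑ j, U (β.coord j) * H (β j) = ∑ i, U (b.coord i) * H (b i) := by
  calc ∑ j, U (β.coord j) * H (β j)
      = ∑ j, ∑ i, U (b.coord i) * (β.coord j (b i) • H (β j)) := by
        refine Finset.sum_congr rfl fun j _ => ?_
        conv_lhs => rw [← b.sum_dual_apply_smul_coord (β.coord j), map_sum, Finset.sum_mul]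
        simp only [map_smul, smul_mul_assoc, mul_smul_comm]
    _ = ∑ i, U (b.coord i) * H (b i) := by
        rw [Finset.sum_comm]
        refine Finset.sum_congr rfl fun i _ => ?_
        conv_rhs => rw [← β.sum_repr (b i), map_sum, Finset.mul_sum]
        simp only [map_smul, Module.Basis.coord_apply]

variable {k S V : Type*} [Field k] [CommRing S] [Algebra k S] [IsNoetherianRing S] [Infinite k]
  [AddCommGroup V] [Module k V] [FiniteDimensional k V]

theorem exists_isWeaklyRegular_ofFn (H : V →ₗ[k] S) {Z : Set V} (hZ : Z.Finite) {r : ℕ}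
    {K : Ideal S} {C : Submodule k V} (hC : Module.finrank k C + r < Module.finrank k V)
    (hZC : ∀ z ∈ Z, z ∉ C) (hr : DepthGE (LinearMap.range H) K r) :
    ∃ b : Fin r → V, IsWeaklyRegular (S ⧸ K) (List.ofFn fun i => H (b i)) ∧
      (∀ z ∈ Z, z ∉ C ⊔ Submodule.span k (Set.range b)) ∧
      Module.finrank k ↥(C ⊔ Submodule.span k (Set.range b)) = Module.finrank k C + r := by
  induction r generalizing K C with
  | zero => exact ⟨Fin.elim0, by simp, by simpa using hZC, by
      rw [Set.range_eq_empty, Submodule.span_empty, sup_bot_eq, add_zero]⟩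
  | succ r ih =>
    have hproper := sup_span_singleton_ne_top (C := C) (by omega)
    obtain ⟨c, ⟨hcreg, hcZ⟩, hcC⟩ :=
      (((eventually_isSMulRegular H hr.colon_le).and (hZ.eventually_all.2 fun z _ =>
        eventually_notMem (hproper z))).and (eventually_notMem (hproper 0))).exists
    rw [Submodule.span_zero_singleton, sup_bot_eq] at hcC
    have hfinrank : Module.finrank k ↥(C ⊔ Submodule.span k {c}) = Module.finrank k C + 1 :=
      Submodule.finrank_sup_span_singleton hcC
    obtain ⟨b, hb, hbZ, hbfin⟩ := ih (by omega)
      (fun z hz => notMem_sup_span_singleton_swap (hZC z hz) (hcZ z hz))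
      (hr.sup_span_singleton hcreg)
    have hspan : C ⊔ Submodule.span k (Set.range (Fin.cons c b : Fin (r + 1) → V)) =
        C ⊔ Submodule.span k {c} ⊔ Submodule.span k (Set.range b) := by
      rw [Fin.range_cons, Submodule.span_insert, sup_assoc]
    refine ⟨Fin.cons c b, ?_, ?_, ?_⟩
    · simpa [List.ofFn_succ] using isWeaklyRegular_quotient_cons.2 ⟨hcreg, hb⟩
    · rwa [hspan]
    · rw [hspan, hbfin, hfinrank]; ring

/-- By duality, the genericity of the first coordinate amounts to the span of the tail avoiding
finitely many vectors. -/
theorem exists_basis_isWeaklyRegular_tail (H : V →ₗ[k] S) {K : Ideal S} {r : ℕ}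
    (hV : Module.finrank k V = r + 1) (hr : DepthGE (LinearMap.range H) K r)
    {P : Module.Dual k V → Prop} (hP : ∀ᶠ φ in genericFilter k (Module.Dual k V), P φ) :
    ∃ β : Module.Basis (Fin (r + 1)) k V, P (β.coord 0) ∧
      IsWeaklyRegular (S ⧸ K) (List.ofFn fun i : Fin r => H (β i.succ)) := by
  obtain ⟨Z, hZ, hZ0, hZP⟩ := exists_finite_of_eventually_dual hP
  obtain ⟨b, hb, hbZ, hbfin⟩ := exists_isWeaklyRegular_ofFn H hZ (C := ⊥) (by simp [hV])
    (fun z hz h => hZ0 ((Submodule.mem_bot k).1 h ▸ hz)) hr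
  rw [bot_sup_eq] at hbZ hbfin
  rw [finrank_bot, zero_add] at hbfin
  have hbli : LinearIndependent k b := linearIndependent_iff_card_eq_finrank_span.2 (by
    rw [Set.finrank, hbfin, Fintype.card_fin])
  have hne : Submodule.span k (Set.range b) ≠ ⊤ := fun h => by
    rw [h, finrank_top] at hbfin; omega
  obtain ⟨v, hv⟩ := (eventually_notMem hne).exists
  have hli : LinearIndependent k (Fin.cons v b : Fin (r + 1) → V) :=
    linearIndependent_finCons.2 ⟨hbli, hv⟩
  let β := basisOfLinearIndependentOfCardEqFinrank hli (by simp [hV])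
  have hβ : ∀ i, β i = (Fin.cons v b : Fin (r + 1) → V) i := fun i => by simp [β]
  refine ⟨β, hZP _ fun z hz h => hbZ z hz ?_, by simpa [hβ] using hb⟩
  rw [← β.sum_repr z, Fin.sum_univ_succ]
  rw [Module.Basis.coord_apply] at h
  rw [h, zero_smul, zero_add]
  refine Submodule.sum_mem _ fun i _ => Submodule.smul_mem _ _ (Submodule.subset_span ⟨i, ?_⟩)
  simp [hβ]

/-- The point is that dual changes of bases of the spans of `u` and `h` preserve
`∑ i, u i * h i`. -/
theorem exists_sum_mul_eq_and_isWeaklyRegular_tail {r : ℕ} {J K : Ideal S} (u h : Fin (r + 1) → S)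
    (hJ : J.colon (Submodule.span k (Set.range u) : Set S) ≤ J)
    (hK : DepthGE (Submodule.span k (Set.range h)) K r) :
    ∃ u' h' : Fin (r + 1) → S,
      Submodule.span k (Set.range u') = Submodule.span k (Set.range u) ∧
      Submodule.span k (Set.range h') = Submodule.span k (Set.range h) ∧
      ∑ i, u' i * h' i = ∑ i, u i * h i ∧
      IsSMulRegular (S ⧸ J) (u' 0) ∧ IsWeaklyRegular (S ⧸ K) (List.ofFn (Fin.tail h')) := by
  let b := Pi.basisFun k (Fin (r + 1))
  let U := b.dualBasis.constr k u
  let H := b.constr k h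
  have hU : LinearMap.range U = Submodule.span k (Set.range u) := b.dualBasis.constr_range k
  have hH : LinearMap.range H = Submodule.span k (Set.range h) := b.constr_range k
  obtain ⟨β, hβJ, hβK⟩ := exists_basis_isWeaklyRegular_tail H (by simp) (hH ▸ hK)
    (eventually_isSMulRegular U (hU ▸ hJ))
  have hUb : ∀ i, U (b.coord i) = u i := fun i => by
    rw [← b.coe_dualBasis]
    exact b.dualBasis.constr_basis k u i
  have hHb : ∀ i, H (b i) = h i := b.constr_basis k h
  refine ⟨fun i => U (β.coord i), fun i => H (β i), ?_, ?_, ?_, hβJ, hβK⟩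
  · rw [← hU, LinearMap.range_eq_map, ← β.dualBasis.span_eq, Submodule.map_span, ← Set.range_comp,
      β.coe_dualBasis]
    rfl
  · rw [← hH, LinearMap.range_eq_map, ← β.span_eq, Submodule.map_span, ← Set.range_comp]
    rfl
  · simp only [sum_coord_mul_eq b β U H, hUb, hHb]

end Selection

section Graded

variable {k σ : Type*} [CommRing k] {I J : Ideal (MvPolynomial σ k)} {a s : MvPolynomial σ k}
  {d e : ℕ}

theorem homogeneousComponent_mul_add (ha : a.IsHomogeneous e) (t : MvPolynomial σ k) (d : ℕ) :
    homogeneousComponent (e + d) (a * t) = a * homogeneousComponent d t := by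
  have h := DirectSum.coe_decompose_mul_add_of_left_mem (homogeneousSubmodule σ k) (i := e) (j := d)
    (a := a) (b := t) ha
  exact (decomposition.decompose'_apply (a * t) (e + d)).symm.trans
    (h.trans (congrArg (a * ·) (decomposition.decompose'_apply t d)))

theorem homogeneousComponent_mul_of_lt (ha : a.IsHomogeneous e) (t : MvPolynomial σ k)
    (hd : d < e) : homogeneousComponent d (a * t) = 0 := by
  have h := DirectSum.coe_decompose_mul_of_left_mem_of_not_le (homogeneousSubmodule σ k) (i := e)
    (n := d) (a := a) (b := t) ha (by omega)
  exact (decomposition.decompose'_apply (a * t) d).symm.trans h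

theorem isHomogeneous_span {A : Set (MvPolynomial σ k)} (hA : ∀ x ∈ A, x.IsHomogeneous e) :
    (Ideal.span A).IsHomogeneous (homogeneousSubmodule σ k) :=
  Ideal.homogeneous_span _ _ fun x hx => ⟨e, hA x hx⟩

theorem isHomogeneous_span_singleton (ha : a.IsHomogeneous e) :
    (Ideal.span {a}).IsHomogeneous (homogeneousSubmodule σ k) :=
  isHomogeneous_span (e := e) fun _ hx => Set.mem_singleton_iff.1 hx ▸ ha

theorem mem_pow_idealOfVars_of_isHomogeneous (hs : s.IsHomogeneous d) :
    s ∈ idealOfVars σ k ^ d := by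
  rw [mem_pow_idealOfVars_iff]
  intro c hc
  rw [Finsupp.degree_eq_weight_one]
  exact (hs (mem_support_iff.1 hc)).ge

theorem pow_idealOfVars_le_iff :
    idealOfVars σ k ^ d ≤ I ↔ ∀ s : MvPolynomial σ k, s.IsHomogeneous d → s ∈ I := by
  refine ⟨fun h s hs => h (mem_pow_idealOfVars_of_isHomogeneous hs), fun h => ?_⟩
  rw [pow_idealOfVars_eq_span, Ideal.span_le]
  rintro _ ⟨c, hc, rfl⟩
  exact h _ (isHomogeneous_monomial _ hc)

theorem mem_of_forall_mem_sup_pow_idealOfVars (hI : I.IsHomogeneous (homogeneousSubmodule σ k))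
    (h : ∀ d, s ∈ I ⊔ idealOfVars σ k ^ d) : s ∈ I := by
  rw [← sum_homogeneousComponent s]
  refine I.sum_mem fun d _ => ?_
  obtain ⟨x, hx, y, hy, rfl⟩ := Submodule.mem_sup.1 (h (d + 1))
  have hyd : homogeneousComponent d y = 0 := homogeneousComponent_eq_zero' _ _ fun c hc =>
    (Nat.lt_of_succ_le ((mem_pow_idealOfVars_iff (d + 1) y).1 hy c hc)).ne'
  rw [map_add, hyd, add_zero]
  exact homogeneousComponent_mem_of_mem hI hx d

/-- The degree-`d` homogeneous component of an ideal. -/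
noncomputable def gradedPart (I : Ideal (MvPolynomial σ k)) (d : ℕ) :
    Submodule k (MvPolynomial σ k) :=
  I.restrictScalars k ⊓ homogeneousSubmodule σ k d

theorem mem_gradedPart : s ∈ gradedPart I d ↔ s ∈ I ∧ s.IsHomogeneous d := Iff.rfl

theorem gradedPart_le : gradedPart I d ≤ homogeneousSubmodule σ k d := inf_le_right

theorem gradedPart_mono (h : I ≤ J) : gradedPart I d ≤ gradedPart J d :=
  inf_le_inf_right _ h

theorem gradedPart_inf : gradedPart (I ⊓ J) d = gradedPart I d ⊓ gradedPart J d :=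
  Submodule.ext fun _ => and_and_right

theorem gradedPart_sup (hI : I.IsHomogeneous (homogeneousSubmodule σ k))
    (hJ : J.IsHomogeneous (homogeneousSubmodule σ k)) :
    gradedPart (I ⊔ J) d = gradedPart I d ⊔ gradedPart J d := by
  refine le_antisymm ?_ (sup_le (gradedPart_mono le_sup_left) (gradedPart_mono le_sup_right))
  rintro s ⟨hs, hd⟩
  obtain ⟨x, hx, y, hy, rfl⟩ := Submodule.mem_sup.1 hs
  rw [← homogeneousComponent_eq_self hd, map_add]
  exact Submodule.add_mem_sup
    ⟨homogeneousComponent_mem_of_mem hI hx d, homogeneousComponent_isHomogeneous d x⟩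
    ⟨homogeneousComponent_mem_of_mem hJ hy d, homogeneousComponent_isHomogeneous d y⟩

theorem gradedPart_span_singleton_add (ha : a.IsHomogeneous e) (d : ℕ) :
    gradedPart (Ideal.span {a}) (e + d) =
      (homogeneousSubmodule σ k d).map (LinearMap.mulLeft k a) := by
  ext s
  constructor
  · rintro ⟨hs, hd⟩
    obtain ⟨t, rfl⟩ := Ideal.mem_span_singleton.1 hs
    refine ⟨homogeneousComponent d t, homogeneousComponent_isHomogeneous d t, ?_⟩
    rw [LinearMap.mulLeft_apply, ← homogeneousComponent_mul_add ha, homogeneousComponent_eq_self hd]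
  · rintro ⟨t, ht, rfl⟩
    exact ⟨Ideal.mem_span_singleton.2 ⟨t, rfl⟩, ha.mul ht⟩

theorem gradedPart_span_singleton_of_lt (ha : a.IsHomogeneous e) (hd : d < e) :
    gradedPart (Ideal.span {a}) d = ⊥ := by
  refine (Submodule.eq_bot_iff _).2 fun s ⟨hs, hsd⟩ => ?_
  obtain ⟨t, rfl⟩ := Ideal.mem_span_singleton.1 hs
  rw [← homogeneousComponent_eq_self hsd, homogeneousComponent_mul_of_lt ha t hd]

theorem gradedPart_colon_singleton (ha : a.IsHomogeneous e) :
    gradedPart (I.colon {a}) d =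
      homogeneousSubmodule σ k d ⊓ (gradedPart I (e + d)).comap (LinearMap.mulLeft k a) := by
  ext s
  rw [mem_gradedPart, Submodule.mem_colon_singleton, smul_eq_mul, mul_comm]
  exact ⟨fun ⟨has, hs⟩ => ⟨hs, has, ha.mul hs⟩, fun ⟨hs, has, _⟩ => ⟨has, hs⟩⟩

theorem span_homogeneousSubmodule_one :
    Ideal.span (homogeneousSubmodule σ k 1 : Set (MvPolynomial σ k)) = idealOfVars σ k := by
  rw [homogeneousSubmodule_one_eq_span_X]
  exact Submodule.span_span_of_tower ..

end Graded

section HilbertFunction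

variable {k σ : Type*} [Field k] {I J B : Ideal (MvPolynomial σ k)} {a : MvPolynomial σ k}
  {d e : ℕ}

/-- The Hilbert function of `S ⧸ I`, for `S` a polynomial ring: the dimension of the degree-`d`
component of `S` modulo that of `I`. -/
noncomputable def hilbertFunction (I : Ideal (MvPolynomial σ k)) (d : ℕ) : ℕ :=
  Module.finrank k (homogeneousSubmodule σ k d ⧸
    (gradedPart I d).comap (homogeneousSubmodule σ k d).subtype)

theorem hilbertFunction_sup_span_singleton_of_lt (hI : I.IsHomogeneous (homogeneousSubmodule σ k))
    (ha : a.IsHomogeneous e) (hd : d < e) :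
    hilbertFunction (I ⊔ Ideal.span {a}) d = hilbertFunction I d := by
  unfold hilbertFunction
  rw [gradedPart_sup hI (isHomogeneous_span_singleton ha),
    gradedPart_span_singleton_of_lt ha hd, sup_bot_eq]

variable [Finite σ]

instance finiteDimensional_homogeneousSubmodule (d : ℕ) :
    FiniteDimensional k (homogeneousSubmodule σ k d) :=
  Module.Finite.iff_fg.2 (homogeneousSubmodule_fg ..)

instance finiteDimensional_gradedPart (I : Ideal (MvPolynomial σ k)) (d : ℕ) :
    FiniteDimensional k (gradedPart I d) :=
  Submodule.finiteDimensional_of_le gradedPart_le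

theorem hilbertFunction_add_finrank (I : Ideal (MvPolynomial σ k)) (d : ℕ) :
    hilbertFunction I d + Module.finrank k (gradedPart I d) =
      Module.finrank k (homogeneousSubmodule σ k d) := by
  rw [← (Submodule.comapSubtypeEquivOfLe (gradedPart_le (I := I) (d := d))).finrank_eq]
  exact Submodule.finrank_quotient_add_finrank _

theorem hilbertFunction_anti (h : I ≤ J) : hilbertFunction J d ≤ hilbertFunction I d := by
  have := Submodule.finrank_mono (gradedPart_mono (d := d) h)
  have := hilbertFunction_add_finrank I d
  have := hilbertFunction_add_finrank J d
  omega

theorem hilbertFunction_eq_zero_iff :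
    hilbertFunction I d = 0 ↔ idealOfVars σ k ^ d ≤ I := by
  have hI := hilbertFunction_add_finrank I d
  rw [pow_idealOfVars_le_iff]
  constructor
  · intro h s hs
    have heq : gradedPart I d = homogeneousSubmodule σ k d :=
      Submodule.eq_of_le_of_finrank_eq gradedPart_le (by omega)
    exact (heq.ge hs).1
  · intro h
    have heq : gradedPart I d = homogeneousSubmodule σ k d :=
      le_antisymm gradedPart_le fun s hs => ⟨h s hs, hs⟩
    rw [heq] at hI
    omega

theorem hilbertFunction_sup_add_inf (hI : I.IsHomogeneous (homogeneousSubmodule σ k))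
    (hJ : J.IsHomogeneous (homogeneousSubmodule σ k)) (d : ℕ) :
    hilbertFunction (I ⊔ J) d + hilbertFunction (I ⊓ J) d =
      hilbertFunction I d + hilbertFunction J d := by
  have hdim := Submodule.finrank_sup_add_finrank_inf_eq (gradedPart I d) (gradedPart J d)
  rw [← gradedPart_sup hI hJ, ← gradedPart_inf] at hdim
  have := hilbertFunction_add_finrank (I ⊔ J) d
  have := hilbertFunction_add_finrank (I ⊓ J) d
  have := hilbertFunction_add_finrank I d
  have := hilbertFunction_add_finrank J d
  omega

theorem hilbertFunction_sup_span_singleton_add_colon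
    (hI : I.IsHomogeneous (homogeneousSubmodule σ k)) (ha : a.IsHomogeneous e) (d : ℕ) :
    hilbertFunction (I ⊔ Ideal.span {a}) (e + d) + hilbertFunction (I.colon {a}) d =
      hilbertFunction I (e + d) := by
  rcases eq_or_ne a 0 with rfl | ha0
  · have : hilbertFunction (I.colon {0}) d = 0 := by
      rw [hilbertFunction_eq_zero_iff, Submodule.colon_singleton_zero]
      exact le_top
    simpa using this
  have hinj : Function.Injective (LinearMap.mulLeft k a) := fun x y h => mul_left_cancel₀ ha0 h
  have hdim := Submodule.finrank_sup_add_finrank_inf_eq (gradedPart I (e + d))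
    ((homogeneousSubmodule σ k d).map (LinearMap.mulLeft k a))
  rw [inf_comm, Submodule.map_inf_eq_map_inf_comap, ← gradedPart_colon_singleton ha,
    ← gradedPart_span_singleton_add ha, ← gradedPart_sup hI (isHomogeneous_span_singleton ha),
    gradedPart_span_singleton_add ha,
    ← (Submodule.equivMapOfInjective _ hinj _).finrank_eq,
    ← (Submodule.equivMapOfInjective _ hinj _).finrank_eq] at hdim
  have := hilbertFunction_add_finrank I (e + d)
  have := hilbertFunction_add_finrank (I ⊔ Ideal.span {a}) (e + d)
  have := hilbertFunction_add_finrank (I.colon {a}) d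
  omega

theorem eventually_gradedPart_le {N : ℕ} (h : idealOfVars σ k ^ N * J ≤ I) :
    ∀ᶠ d in atTop, gradedPart J d ≤ gradedPart I d := by
  obtain ⟨c, hc⟩ := Ideal.exists_pow_inf_eq_pow_smul (idealOfVars σ k) J
  filter_upwards [eventually_ge_atTop (c + N)] with d hd s ⟨hsJ, hs⟩
  have hsd : s ∈ idealOfVars σ k ^ d • ⊤ ⊓ J :=
    ⟨by simpa using mem_pow_idealOfVars_of_isHomogeneous hs, hsJ⟩
  rw [hc d (by omega)] at hsd
  exact ⟨h (Ideal.mul_mono (Ideal.pow_le_pow_right (by omega)) inf_le_right hsd), hs⟩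

theorem eventually_hilbertFunction_eq {N : ℕ} (hIJ : I ≤ J) (h : idealOfVars σ k ^ N * J ≤ I) :
    ∀ᶠ d in atTop, hilbertFunction I d = hilbertFunction J d := by
  filter_upwards [eventually_gradedPart_le h] with d hd
  unfold hilbertFunction
  rw [le_antisymm (gradedPart_mono hIJ) hd]

theorem eventually_hilbertFunction_add_eq {N : ℕ}
    (hI : I.IsHomogeneous (homogeneousSubmodule σ k))
    (hJ : J.IsHomogeneous (homogeneousSubmodule σ k)) (hBI : B ≤ I) (hBJ : B ≤ J)
    (hIJ : I * J ≤ B) (hN : idealOfVars σ k ^ N ≤ I ⊔ J) :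
    ∀ᶠ d in atTop, hilbertFunction I d + hilbertFunction J d = hilbertFunction B d := by
  have hinf : idealOfVars σ k ^ N * (I ⊓ J) ≤ B := by
    refine (Ideal.mul_mono_left hN).trans (Ideal.sup_mul .. |>.trans_le (sup_le ?_ ?_))
    · exact (Ideal.mul_mono_right inf_le_right).trans hIJ
    · exact (Ideal.mul_mono_right inf_le_left).trans (mul_comm J I ▸ hIJ)
  filter_upwards [eventually_hilbertFunction_eq (le_inf hBI hBJ) hinf, eventually_ge_atTop N]
    with d hBd hd
  rw [← hilbertFunction_sup_add_inf hI hJ, hBd,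
    hilbertFunction_eq_zero_iff.2 ((Ideal.pow_le_pow_right hd).trans hN), zero_add]

/-- Otherwise multiplication by `y` would eventually make the Hilbert function strictly
increasing. -/
theorem exists_pow_idealOfVars_le_sup_span_singleton
    (hI : I.IsHomogeneous (homogeneousSubmodule σ k)) {y : MvPolynomial σ k}
    (hy : y.IsHomogeneous 1) {N c : ℕ} (hyI : idealOfVars σ k ^ N * I.colon {y} ≤ I)
    (hc : ∀ᶠ d in atTop, hilbertFunction I d ≤ c) :
    ∃ M, idealOfVars σ k ^ M ≤ I ⊔ Ideal.span {y} := by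
  simp only [← hilbertFunction_eq_zero_iff]
  by_contra! hne
  obtain ⟨D, hD⟩ := eventually_atTop.1
    (hc.and (eventually_hilbertFunction_eq Ideal.le_colon hyI))
  have hmono : StrictMono fun d => hilbertFunction I (D + d) := by
    refine strictMono_nat_of_lt_succ fun d => ?_
    have := hilbertFunction_sup_span_singleton_add_colon hI hy (D + d)
    have := (hD (D + d) (by omega)).2
    have := hne (1 + (D + d))
    rw [show D + (d + 1) = 1 + (D + d) by ring]
    omega
  have := hmono.le_apply (x := c + 1)
  have := (hD (D + (c + 1)) (by omega)).1
  omega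

theorem exists_saturation (I : Ideal (MvPolynomial σ k)) :
    ∃ (J : Ideal (MvPolynomial σ k)) (N : ℕ),
      idealOfVars σ k ^ N * J ≤ I ∧ I ≤ J ∧ J.colon (idealOfVars σ k : Set _) ≤ J := by
  let sat : ℕ →o Ideal (MvPolynomial σ k) :=
    ⟨fun N => I.colon ((idealOfVars σ k ^ N : Ideal _) : Set _), fun _ _ h =>
      Submodule.colon_mono le_rfl (Ideal.pow_le_pow_right h)⟩
  obtain ⟨N, hN⟩ := monotone_stabilizes_iff_noetherian.2 inferInstance sat
  refine ⟨sat N, N, ?_, Ideal.le_colon, ?_⟩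
  · rw [Ideal.mul_le]
    exact fun x hx s hs => mul_comm s x ▸ Submodule.mem_colon.1 hs x hx
  · refine le_trans (fun s hs => ?_) (hN (N + 1) N.le_succ).ge
    refine Submodule.mem_colon.2 fun z hz => ?_
    rw [pow_succ] at hz
    refine Submodule.mul_induction_on hz (fun x hx y hy => ?_) fun x y hx hy => ?_
    · rw [smul_eq_mul, mul_comm x y, ← mul_assoc]
      exact Submodule.mem_colon.1 (Submodule.mem_colon.1 hs y hy) x hx
    · rw [smul_add]
      exact I.add_mem hx hy

end HilbertFunction

section Descent

variable {k σ : Type*} [Field k] {K : Ideal (MvPolynomial σ k)} {F : MvPolynomial σ k}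

theorem colon_le_of_colon_sup_span_singleton_le {W : Set (MvPolynomial σ k)}
    (hK : K.IsHomogeneous (homogeneousSubmodule σ k)) (hF : F ∈ idealOfVars σ k)
    (hKF : IsSMulRegular (MvPolynomial σ k ⧸ K) F)
    (hW : (K ⊔ Ideal.span {F}).colon W ≤ K ⊔ Ideal.span {F}) : K.colon W ≤ K := by
  have happrox : ∀ d, K.colon W ≤ K ⊔ idealOfVars σ k ^ d := by
    intro d
    induction d with
    | zero => simp
    | succ d ih =>
      intro s hs
      obtain ⟨t, hst⟩ := mem_sup_span_singleton.1
        (hW (Submodule.colon_mono le_sup_left le_rfl hs))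
      have ht : t ∈ K.colon W := Submodule.mem_colon.2 fun w hw => by
        refine isSMulRegular_quotient_iff.1 hKF _ ?_
        convert K.sub_mem (Submodule.mem_colon.1 hs w hw) (K.mul_mem_right w hst) using 1
        simp only [smul_eq_mul]
        ring
      obtain ⟨u, hu, v, hv, rfl⟩ := Submodule.mem_sup.1 (ih ht)
      refine Submodule.mem_sup.2 ⟨_, K.add_mem hst (K.mul_mem_left F hu), F * v, ?_, by ring⟩
      rw [pow_succ']
      exact Ideal.mul_mem_mul hF hv
  exact fun s hs => mem_of_forall_mem_sup_pow_idealOfVars hK fun d => happrox d hs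

theorem DepthGE.of_sup_span_singleton [Finite σ] [Infinite k] {W : Submodule k (MvPolynomial σ k)}
    {e : ℕ} (hW : W ≤ homogeneousSubmodule σ k e) (hF : F ∈ idealOfVars σ k) {r : ℕ}
    (hK : K.IsHomogeneous (homogeneousSubmodule σ k))
    (hKF : IsSMulRegular (MvPolynomial σ k ⧸ K) F) (h : DepthGE W (K ⊔ Ideal.span {F}) r) :
    DepthGE W K r := by
  induction r generalizing K with
  | zero => exact depthGE_zero
  | succ r ih =>
    obtain ⟨⟨c, hcW⟩, hc, hcF⟩ := ((eventually_isSMulRegular_coe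
      (colon_le_of_colon_sup_span_singleton_le hK hF hKF h.colon_le)).and
        (eventually_isSMulRegular_coe h.colon_le)).exists
    have hexch : DepthGE W (K ⊔ Ideal.span {c} ⊔ Ideal.span {F}) r :=
      sup_right_comm K _ _ ▸ h.sup_span_singleton hcF
    exact depthGE_succ_iff.2 ⟨c, hcW, hc,
      ih (hK.sup (isHomogeneous_span_singleton (hW hcW)))
        (isSMulRegular_sup_span_singleton_swap hKF hcF) hexch⟩

end Descent

section LinearForms

theorem finrank_sup_span_singleton_of_notMem {k V : Type*} [Field k] [AddCommGroup V]
    [Module k V] {C : Submodule k V} [FiniteDimensional k C] {y : V} (hyC : y ∉ C) :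
    Module.finrank k ↥(C ⊔ Submodule.span k {y}) = Module.finrank k C + 1 := by
  have hy0 : y ≠ 0 := fun h => hyC (h ▸ C.zero_mem)
  have hdim := Submodule.finrank_sup_add_finrank_inf_eq C (Submodule.span k {y})
  rwa [((Submodule.disjoint_span_singleton' hy0).2 hyC).eq_bot, finrank_bot, add_zero,
    finrank_span_singleton hy0] at hdim

theorem span_sup_span_singleton {k S : Type*} [CommRing k] [CommRing S] [Algebra k S]
    (C : Submodule k S) (y : S) :
    Ideal.span ((C ⊔ Submodule.span k {y} : Submodule k S) : Set S) =
      Ideal.span (C : Set S) ⊔ Ideal.span {y} := by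
  rw [sup_comm, Submodule.span_sup, Ideal.span, Submodule.span_span_of_tower,
    Submodule.span_union, sup_comm]

variable {k σ : Type*} [Field k] {C : Submodule k (MvPolynomial σ k)} {y : MvPolynomial σ k}

/-- The substitution that replaces each linear form `ℓ` by `ℓ + l ℓ * (T - y)`, for `T` a new
variable. If `l y = 1`, then `y` becomes `T`, while the forms in the kernel of `l` are fixed. -/
noncomputable def substLinear (l : MvPolynomial σ k →ₗ[k] k) (y : MvPolynomial σ k) :
    MvPolynomial σ k →ₐ[k] Polynomial (MvPolynomial σ k) :=
  aeval fun i => Polynomial.C (X i) + l (X i) • (Polynomial.X - Polynomial.C y)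

theorem substLinear_apply (l : MvPolynomial σ k →ₗ[k] k) (y : MvPolynomial σ k)
    {x : MvPolynomial σ k} (hx : x.IsHomogeneous 1) :
    substLinear l y x = Polynomial.C x + l x • (Polynomial.X - Polynomial.C y) := by
  rw [← mem_homogeneousSubmodule, homogeneousSubmodule_one_eq_span_X] at hx
  induction hx using Submodule.span_induction with
  | mem x hx =>
    obtain ⟨i, rfl⟩ := hx
    rw [substLinear, aeval_X]
  | zero => simp
  | add x z _ _ hx hz => rw [map_add, hx, hz, map_add, map_add, add_smul]; ring
  | smul c x _ hx =>
    rw [map_smul, hx, smul_add, Polynomial.smul_C, l.map_smul, smul_assoc]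

theorem eval_substLinear (l : MvPolynomial σ k →ₗ[k] k) (y s : MvPolynomial σ k) :
    (substLinear l y s).eval y = s := by
  have : (Polynomial.aeval y).toRingHom.comp (substLinear l y).toRingHom = RingHom.id _ := by
    refine ringHom_ext (fun c => ?_) fun i => ?_
    · simp [substLinear]
    · simp [substLinear]
  exact DFunLike.congr_fun this s

theorem isSMulRegular_quotient_span_of_notMem (hC : C ≤ homogeneousSubmodule σ k 1)
    (hy : y.IsHomogeneous 1) (hyC : y ∉ C) :
    IsSMulRegular (MvPolynomial σ k ⧸ Ideal.span (C : Set (MvPolynomial σ k))) y := by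
  set K := Ideal.span (C : Set (MvPolynomial σ k))
  obtain ⟨l, hly, hlC⟩ : ∃ l : MvPolynomial σ k →ₗ[k] k, l y = 1 ∧ ∀ c ∈ C, l c = 0 := by
    obtain ⟨l, hly, hlC⟩ := Submodule.exists_le_ker_of_notMem hyC
    exact ⟨(l y)⁻¹ • l, inv_mul_cancel₀ hly, fun c hc => by simp [LinearMap.mem_ker.1 (hlC hc)]⟩
  have hsubst : ∀ s ∈ K, substLinear l y s ∈ K.map Polynomial.C := by
    refine Ideal.span_le (I := (K.map Polynomial.C).comap (substLinear l y)).2 fun c hc => ?_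
    rw [SetLike.mem_coe, Ideal.mem_comap, substLinear_apply l y (hC hc), hlC c hc, zero_smul,
      add_zero]
    exact Ideal.mem_map_of_mem _ (Ideal.subset_span hc)
  rw [isSMulRegular_quotient_iff]
  intro s hs
  have hmul := hsubst _ hs
  rw [map_mul, substLinear_apply l y hy, hly, one_smul, add_sub_cancel, Ideal.mem_map_C_iff] at hmul
  rw [← eval_substLinear l y s, Polynomial.eval_eq_sum]
  refine K.sum_mem fun i _ => K.mul_mem_right _ ?_
  simpa only [Polynomial.coeff_X_mul] using hmul (i + 1)

variable [Fintype σ]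

theorem finrank_homogeneousSubmodule_one :
    Module.finrank k (homogeneousSubmodule σ k 1) = Fintype.card σ := by
  rw [homogeneousSubmodule_one_eq_span_X, finrank_span_eq_card (linearIndependent_X σ k)]

theorem exists_linearForm_notMem (hC : C ≤ homogeneousSubmodule σ k 1)
    {r : ℕ} (hr : Module.finrank k C + (r + 1) = Fintype.card σ) :
    ∃ y, y.IsHomogeneous 1 ∧ y ∉ C ∧ C ⊔ Submodule.span k {y} ≤ homogeneousSubmodule σ k 1 ∧
      Module.finrank k ↥(C ⊔ Submodule.span k {y}) + r = Fintype.card σ := by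
  have : FiniteDimensional k C := Submodule.finiteDimensional_of_le hC
  have hlt : C < homogeneousSubmodule σ k 1 := hC.lt_of_ne fun h => by
    rw [h, finrank_homogeneousSubmodule_one] at hr
    omega
  obtain ⟨y, hy, hyC⟩ := SetLike.exists_of_lt hlt
  refine ⟨y, hy, hyC, sup_le hC ((Submodule.span_singleton_le_iff_mem ..).2 hy), ?_⟩
  rw [finrank_sup_span_singleton_of_notMem hyC]
  omega

theorem depthGE_homogeneousSubmodule_one {r : ℕ} (hC : C ≤ homogeneousSubmodule σ k 1)
    (hr : Module.finrank k C + r = Fintype.card σ) :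
    DepthGE (homogeneousSubmodule σ k 1) (Ideal.span (C : Set (MvPolynomial σ k))) r := by
  induction r generalizing C with
  | zero => exact depthGE_zero
  | succ r ih =>
    obtain ⟨y, hy, hyC, hC', hr'⟩ := exists_linearForm_notMem hC hr
    exact depthGE_succ_iff.2 ⟨y, hy, isSMulRegular_quotient_span_of_notMem hC hy hyC,
      span_sup_span_singleton C y ▸ ih hC' hr'⟩

end LinearForms

section HilbertSeries

variable {k σ : Type*} [Field k] {K : Ideal (MvPolynomial σ k)} {a : MvPolynomial σ k} {e : ℕ}

/-- The Hilbert series of `S ⧸ I`, for `S` a polynomial ring. -/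
noncomputable def hilbertSeries (I : Ideal (MvPolynomial σ k)) : PowerSeries ℤ :=
  PowerSeries.mk fun d => (hilbertFunction I d : ℤ)

theorem coeff_hilbertSeries (I : Ideal (MvPolynomial σ k)) (d : ℕ) :
    PowerSeries.coeff d (hilbertSeries I) = hilbertFunction I d :=
  PowerSeries.coeff_mk ..

variable [Finite σ]

theorem hilbertFunction_idealOfVars (d : ℕ) :
    hilbertFunction (idealOfVars σ k) d = if d = 0 then 1 else 0 := by
  split_ifs with hd
  · subst hd
    have hbot : gradedPart (idealOfVars σ k) 0 = ⊥ := by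
      refine (Submodule.eq_bot_iff _).2 fun s ⟨hs, hs0⟩ => ?_
      rw [← homogeneousComponent_eq_self hs0]
      refine homogeneousComponent_eq_zero' _ _ fun c hc => Nat.ne_of_gt ?_
      exact (mem_pow_idealOfVars_iff 1 s).1 ((pow_one (idealOfVars σ k)).ge hs) c hc
    have h := hilbertFunction_add_finrank (idealOfVars σ k) 0
    rwa [hbot, finrank_bot, add_zero, homogeneousSubmodule_zero, Submodule.one_eq_span,
      finrank_span_singleton one_ne_zero] at h
  · rw [hilbertFunction_eq_zero_iff]
    exact Ideal.pow_le_self hd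

theorem hilbertSeries_sup_span_singleton (hK : K.IsHomogeneous (homogeneousSubmodule σ k))
    (ha : a.IsHomogeneous e) (hreg : IsSMulRegular (MvPolynomial σ k ⧸ K) a) :
    hilbertSeries (K ⊔ Ideal.span {a}) = hilbertSeries K * (1 - PowerSeries.X ^ e) := by
  ext d
  rw [mul_sub, mul_one, map_sub, PowerSeries.coeff_mul_X_pow']
  simp only [coeff_hilbertSeries]
  split_ifs with hd
  · obtain ⟨d, rfl⟩ := Nat.exists_eq_add_of_le hd
    have := hilbertFunction_sup_span_singleton_add_colon hK ha d
    rw [colon_singleton_eq_of_isSMulRegular hreg] at this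
    rw [Nat.add_sub_cancel_left]
    omega
  · rw [hilbertFunction_sup_span_singleton_of_lt hK ha (by omega), sub_zero]

theorem hilbertSeries_sup_ofList (hK : K.IsHomogeneous (homogeneousSubmodule σ k))
    {as : List (MvPolynomial σ k)} (has : ∀ a ∈ as, a.IsHomogeneous e)
    (hreg : IsWeaklyRegular (MvPolynomial σ k ⧸ K) as) :
    hilbertSeries (K ⊔ Ideal.ofList as) =
      hilbertSeries K * (1 - PowerSeries.X ^ e) ^ as.length := by
  induction as generalizing K with
  | nil => simp
  | cons a as ih =>
    rw [List.forall_mem_cons] at has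
    rw [isWeaklyRegular_quotient_cons] at hreg
    rw [Ideal.ofList_cons, ← sup_assoc,
      ih (hK.sup (isHomogeneous_span_singleton has.1)) has.2 hreg.2,
      hilbertSeries_sup_span_singleton hK has.1 hreg.1, List.length_cons, pow_succ', mul_assoc]

end HilbertSeries

section CompleteIntersection

variable {k σ : Type*} [Field k] [Fintype σ] {C : Submodule k (MvPolynomial σ k)} {r e : ℕ}

theorem hilbertSeries_span_mul_one_sub_pow (hC : C ≤ homogeneousSubmodule σ k 1)
    (hr : Module.finrank k C + r = Fintype.card σ) :
    hilbertSeries (Ideal.span (C : Set (MvPolynomial σ k))) * (1 - PowerSeries.X) ^ r = 1 := by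
  induction r generalizing C with
  | zero =>
    have hC' : C = homogeneousSubmodule σ k 1 := Submodule.eq_of_le_of_finrank_eq hC
      (by rw [finrank_homogeneousSubmodule_one, ← hr, add_zero])
    ext d
    rw [hC', span_homogeneousSubmodule_one, pow_zero, mul_one, coeff_hilbertSeries,
      hilbertFunction_idealOfVars, PowerSeries.coeff_one]
    split_ifs <;> rfl
  | succ r ih =>
    obtain ⟨y, hy, hyC, hC', hr'⟩ := exists_linearForm_notMem hC hr
    have h := ih hC' hr'
    rwa [span_sup_span_singleton, hilbertSeries_sup_span_singleton (isHomogeneous_span hC) hy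
      (isSMulRegular_quotient_span_of_notMem hC hy hyC), pow_one, mul_assoc, ← pow_succ'] at h

theorem eventually_coeff_eq_eval_one {R : Type*} [CommRing R] {f : PowerSeries R}
    {P : Polynomial R} (h : f * (1 - PowerSeries.X) = (P : PowerSeries R)) :
    ∀ᶠ d in atTop, PowerSeries.coeff d f = P.eval 1 := by
  have hf : f = (P : PowerSeries R) * PowerSeries.mk 1 := by
    rw [← h, mul_assoc, mul_comm (1 - PowerSeries.X), PowerSeries.mk_one_mul_one_sub_eq_one,
      mul_one]
  filter_upwards [eventually_ge_atTop P.natDegree] with d hd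
  rw [hf, PowerSeries.coeff_mul, Finset.Nat.sum_antidiagonal_eq_sum_range_succ_mk,
    Polynomial.eval_eq_sum_range' (Nat.lt_succ_of_le hd)]
  simp

theorem eventually_hilbertFunction_completeIntersection (hC : C ≤ homogeneousSubmodule σ k 1)
    {as : List (MvPolynomial σ k)} (hr : Module.finrank k C + (as.length + 1) = Fintype.card σ)
    (has : ∀ a ∈ as, a.IsHomogeneous e)
    (hreg : IsWeaklyRegular (MvPolynomial σ k ⧸ Ideal.span (C : Set (MvPolynomial σ k))) as) :
    ∀ᶠ d in atTop, hilbertFunction (Ideal.span (C : Set (MvPolynomial σ k)) ⊔ Ideal.ofList as) d =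
      e ^ as.length := by
  set K := Ideal.span (C : Set (MvPolynomial σ k))
  let P : Polynomial ℤ := (∑ i ∈ Finset.range e, Polynomial.X ^ i) ^ as.length
  have hP : hilbertSeries (K ⊔ Ideal.ofList as) * (1 - PowerSeries.X) = (P : PowerSeries ℤ) := by
    have hgeom : (P : PowerSeries ℤ) * (1 - PowerSeries.X) ^ as.length =
        (1 - PowerSeries.X ^ e) ^ as.length := by
      rw [← geom_sum_mul_neg, mul_pow]
      simp only [P, ← Polynomial.coeToPowerSeries.ringHom_apply, map_pow, map_sum]
      simp only [Polynomial.coeToPowerSeries.ringHom_apply, Polynomial.coe_X]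
    have hne : (1 - PowerSeries.X : PowerSeries ℤ) ^ as.length ≠ 0 :=
      pow_ne_zero _ (right_ne_zero_of_mul_eq_one (PowerSeries.mk_one_mul_one_sub_eq_one ℤ))
    refine mul_right_cancel₀ hne ?_
    rw [hgeom, hilbertSeries_sup_ofList (isHomogeneous_span hC) has hreg, mul_right_comm, mul_assoc,
      mul_assoc, ← pow_succ, ← mul_assoc, mul_right_comm, hilbertSeries_span_mul_one_sub_pow hC hr,
      one_mul]
  filter_upwards [eventually_coeff_eq_eval_one hP] with d hd
  have hPeval : P.eval 1 = (e : ℤ) ^ as.length := by simp [P, Polynomial.eval_finsetSum]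
  rw [coeff_hilbertSeries, hPeval] at hd
  exact_mod_cast hd

end CompleteIntersection

section Linkage

theorem span_range_eq_span_range_tail_sup {S : Type*} [CommRing S] {r : ℕ} (h : Fin (r + 1) → S) :
    Ideal.span (Set.range h) = Ideal.span (Set.range (Fin.tail h)) ⊔ Ideal.span {h 0} := by
  rw [← Fin.cons_self_tail h, Fin.range_cons, Ideal.span_insert, sup_comm]
  rfl

variable {k σ : Type*} [Field k] [Finite σ]

theorem eventually_hilbertFunction_linkage {B : Ideal (MvPolynomial σ k)} {y g : MvPolynomial σ k}
    {d e N : ℕ} (hB : B.IsHomogeneous (homogeneousSubmodule σ k)) (hy : y.IsHomogeneous d)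
    (hg : g.IsHomogeneous e) (hyg : y * g ∈ B)
    (hN : idealOfVars σ k ^ N ≤ B ⊔ Ideal.span {g} ⊔ Ideal.span {y}) :
    ∀ᶠ d in atTop, hilbertFunction (B ⊔ Ideal.span {g}) d +
      hilbertFunction (B ⊔ Ideal.span {y}) d = hilbertFunction B d := by
  refine eventually_hilbertFunction_add_eq (hB.sup (isHomogeneous_span_singleton hg))
    (hB.sup (isHomogeneous_span_singleton hy)) le_sup_left le_sup_left ?_
    (hN.trans (sup_le le_sup_left (le_sup_right.trans le_sup_right)))
  rw [Ideal.sup_mul, Ideal.mul_sup (Ideal.span {g}), Ideal.span_singleton_mul_span_singleton,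
    mul_comm g y]
  exact sup_le Ideal.mul_le_left
    (sup_le Ideal.mul_le_right ((Ideal.span_singleton_le_iff_mem _).2 hyg))

end Linkage

section LinearSyzygy

variable {k σ : Type*} [Field k] [Fintype σ] {e r : ℕ} {C : Submodule k (MvPolynomial σ k)}

/-- A linear syzygy `∑ i, u i * h i = 0` between `r + 1` forms `h i` of degree `e` on the
linear subspace cut out by the space `C` of linear forms, where the `u i` are linear coordinates on
this subspace and the span of the `h i` has depth at least `r` there. -/
structure IsLinearSyzygy (e : ℕ) (C : Submodule k (MvPolynomial σ k))
    (u h : Fin (r + 1) → MvPolynomial σ k) : Prop where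
  le : C ≤ homogeneousSubmodule σ k 1
  finrank_add : Module.finrank k C + (r + 1) = Fintype.card σ
  sup_span : C ⊔ Submodule.span k (Set.range u) = homogeneousSubmodule σ k 1
  isHomogeneous : ∀ i, (h i).IsHomogeneous e
  sum_mem : ∑ i, u i * h i ∈ Ideal.span (C : Set (MvPolynomial σ k))
  depthGE : DepthGE (Submodule.span k (Set.range h)) (Ideal.span (C : Set (MvPolynomial σ k))) r

namespace IsLinearSyzygy

variable {u h : Fin (r + 1) → MvPolynomial σ k}

theorem isHomogeneous_one (H : IsLinearSyzygy e C u h) (i : Fin (r + 1)) : (u i).IsHomogeneous 1 :=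
  H.sup_span.le (Submodule.mem_sup_right (Submodule.subset_span ⟨i, rfl⟩))

theorem head_notMem (H : IsLinearSyzygy e C u h) : u 0 ∉ C := by
  intro hu
  have : FiniteDimensional k C := Submodule.finiteDimensional_of_le H.le
  have htail : C ⊔ Submodule.span k (Set.range (Fin.tail u)) = homogeneousSubmodule σ k 1 := by
    rw [← H.sup_span, ← Fin.cons_self_tail u, Fin.range_cons, Submodule.span_insert, ← sup_assoc,
      sup_of_le_left (b := Submodule.span k {u 0}) ((Submodule.span_singleton_le_iff_mem ..).2 hu),
      Fin.cons_self_tail]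
  have := FiniteDimensional.span_of_finite k (Set.finite_range (Fin.tail u))
  have hdim := Submodule.finrank_add_le_finrank_add_finrank C
    (Submodule.span k (Set.range (Fin.tail u)))
  have hcard := finrank_range_le_card (R := k) (Fin.tail u)
  rw [htail, finrank_homogeneousSubmodule_one] at hdim
  rw [Set.finrank, Fintype.card_fin] at hcard
  have := H.finrank_add
  omega

theorem isSMulRegular_head (H : IsLinearSyzygy e C u h) :
    IsSMulRegular (MvPolynomial σ k ⧸ Ideal.span (C : Set (MvPolynomial σ k))) (u 0) :=
  isSMulRegular_quotient_span_of_notMem H.le (H.isHomogeneous_one 0) H.head_notMem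

theorem head_mul_head_mem (H : IsLinearSyzygy e C u h) :
    u 0 * h 0 ∈ Ideal.span (C : Set (MvPolynomial σ k)) ⊔ Ideal.span (Set.range (Fin.tail h)) := by
  rw [← add_sub_cancel_right (u 0 * h 0) (∑ i : Fin r, u i.succ * h i.succ), ← Fin.sum_univ_succ
    fun i => u i * h i]
  exact Ideal.sub_mem _ (Ideal.mem_sup_left H.sum_mem) (Ideal.mem_sup_right
    (Ideal.sum_mem _ fun i _ => Ideal.mul_mem_left _ _ (Ideal.subset_span ⟨i, rfl⟩)))

theorem eventually_hilbertFunction_eq_one {u h : Fin 1 → MvPolynomial σ k}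
    (H : IsLinearSyzygy e C u h) :
    ∀ᶠ d in atTop, hilbertFunction (Ideal.span (C : Set (MvPolynomial σ k)) ⊔
      Ideal.span (Set.range h)) d = 1 := by
  have h0 : h 0 ∈ Ideal.span (C : Set (MvPolynomial σ k)) :=
    isSMulRegular_quotient_iff.1 H.isSMulRegular_head _ (by simpa using H.sum_mem)
  rw [sup_of_le_left (b := Ideal.span (Set.range h))]
  · simpa using eventually_hilbertFunction_completeIntersection H.le (as := []) (e := 0)
      H.finrank_add (by simp) (IsWeaklyRegular.nil _ _)
  · rw [Ideal.span_le]
    rintro _ ⟨i, rfl⟩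
    rwa [Subsingleton.elim i 0]

theorem eventually_hilbertFunction_tail (H : IsLinearSyzygy e C u h)
    (hreg : IsWeaklyRegular (MvPolynomial σ k ⧸ Ideal.span (C : Set (MvPolynomial σ k)))
      (List.ofFn (Fin.tail h))) :
    ∀ᶠ d in atTop, hilbertFunction (Ideal.span (C : Set (MvPolynomial σ k)) ⊔
      Ideal.span (Set.range (Fin.tail h))) d = e ^ r := by
  have hlist : Ideal.ofList (List.ofFn (Fin.tail h)) = Ideal.span (Set.range (Fin.tail h)) := by
    simp only [Ideal.ofList, List.mem_ofFn']
    rfl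
  have := eventually_hilbertFunction_completeIntersection H.le (as := List.ofFn (Fin.tail h))
    (by rw [List.length_ofFn]; exact H.finrank_add)
    (List.forall_mem_ofFn_iff.2 fun i => H.isHomogeneous i.succ) hreg
  rwa [hlist, List.length_ofFn] at this

variable [Infinite k]

theorem exists_regular_head_tail (H : IsLinearSyzygy e C u h) {J : Ideal (MvPolynomial σ k)}
    (hCJ : Ideal.span (C : Set (MvPolynomial σ k)) ≤ J)
    (hJ : J.colon (idealOfVars σ k : Set (MvPolynomial σ k)) ≤ J) :
    ∃ u' h' : Fin (r + 1) → MvPolynomial σ k, IsLinearSyzygy e C u' h' ∧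
      Ideal.span (Set.range h') = Ideal.span (Set.range h) ∧
      IsSMulRegular (MvPolynomial σ k ⧸ J) (u' 0) ∧
      IsWeaklyRegular (MvPolynomial σ k ⧸ Ideal.span (C : Set (MvPolynomial σ k)))
        (List.ofFn (Fin.tail h')) := by
  have hJu : J.colon (Submodule.span k (Set.range u) : Set (MvPolynomial σ k)) ≤ J := by
    intro s hs
    have hvars : idealOfVars σ k ≤ J.colon {s} := Ideal.span_le.2 fun x hx => by
      have hx1 : x ∈ C ⊔ Submodule.span k (Set.range u) := by
        rw [H.sup_span, homogeneousSubmodule_one_eq_span_X]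
        exact Submodule.subset_span hx
      obtain ⟨c, hc, v, hv, rfl⟩ := Submodule.mem_sup.1 hx1
      refine Submodule.mem_colon_singleton.2 ?_
      rw [add_smul]
      refine J.add_mem (J.mul_mem_right s (hCJ (Ideal.subset_span hc))) ?_
      rw [smul_eq_mul, mul_comm]
      exact Submodule.mem_colon.1 hs v hv
    refine hJ (Submodule.mem_colon.2 fun x hx => ?_)
    rw [smul_eq_mul, mul_comm]
    exact Submodule.mem_colon_singleton.1 (hvars hx)
  obtain ⟨u', h', hu', hh', hsum, hreg0, hreg⟩ :=
    exists_sum_mul_eq_and_isWeaklyRegular_tail u h hJu H.depthGE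
  have hhom : Submodule.span k (Set.range h') ≤ homogeneousSubmodule σ k e := by
    rw [hh', Submodule.span_le]
    rintro _ ⟨i, rfl⟩
    exact H.isHomogeneous i
  refine ⟨u', h', ⟨H.le, H.finrank_add, hu' ▸ H.sup_span, fun i => hhom (Submodule.subset_span
    ⟨i, rfl⟩), hsum ▸ H.sum_mem, hh' ▸ H.depthGE⟩, ?_, hreg0, hreg⟩
  rw [Ideal.span, ← Submodule.span_span_of_tower k, hh', Submodule.span_span_of_tower]

theorem tail {u h : Fin (r + 2) → MvPolynomial σ k} (H : IsLinearSyzygy e C u h)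
    (hreg : IsWeaklyRegular (MvPolynomial σ k ⧸ Ideal.span (C : Set (MvPolynomial σ k)))
      (List.ofFn (Fin.tail h))) :
    IsLinearSyzygy e (C ⊔ Submodule.span k {u 0}) (Fin.tail u) (Fin.tail h) where
  le := sup_le H.le ((Submodule.span_singleton_le_iff_mem ..).2 (H.isHomogeneous_one 0))
  finrank_add := by
    have : FiniteDimensional k C := Submodule.finiteDimensional_of_le H.le
    rw [finrank_sup_span_singleton_of_notMem H.head_notMem, ← H.finrank_add]
    ring
  sup_span := by
    rw [sup_assoc, ← Submodule.span_insert, ← Fin.range_cons, Fin.cons_self_tail, H.sup_span]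
  isHomogeneous i := H.isHomogeneous i.succ
  sum_mem := by
    have hsum := H.sum_mem
    rw [Fin.sum_univ_succ] at hsum
    rw [span_sup_span_singleton]
    exact mem_sup_span_singleton.2 ⟨-h 0, by simpa [Fin.tail, add_comm] using hsum⟩
  depthGE := by
    rw [span_sup_span_singleton]
    have hdepth : DepthGE (Submodule.span k (Set.range (Fin.tail h)))
        (Ideal.span (C : Set (MvPolynomial σ k))) (r + 1) :=
      ⟨_, List.length_ofFn,
        List.forall_mem_ofFn_iff.2 fun i => Submodule.subset_span ⟨i, rfl⟩, hreg⟩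
    exact hdepth.sup_span_singleton H.isSMulRegular_head

theorem eventually_hilbertFunction_mul (H : IsLinearSyzygy e C u h) :
    ∀ᶠ d in atTop, (hilbertFunction (Ideal.span (C : Set (MvPolynomial σ k)) ⊔
      Ideal.span (Set.range h)) d : ℤ) * (e + 1) = e ^ (r + 1) - (-1) ^ (r + 1) := by
  induction r generalizing C with
  | zero =>
    filter_upwards [H.eventually_hilbertFunction_eq_one] with d hd
    simp [hd]
  | succ r ih =>
    set K := Ideal.span (C : Set (MvPolynomial σ k))
    obtain ⟨J, N, hNJ, hIJ, hsat⟩ := exists_saturation (K ⊔ Ideal.span (Set.range h))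
    obtain ⟨u', h', H', hspan, hreg0, hreg⟩ :=
      H.exists_regular_head_tail (le_sup_left.trans hIJ) hsat
    set B := K ⊔ Ideal.span (Set.range (Fin.tail h'))
    have hI : K ⊔ Ideal.span (Set.range h) = B ⊔ Ideal.span {h' 0} := by
      rw [← hspan, span_range_eq_span_range_tail_sup, sup_assoc]
    have hBhom : B.IsHomogeneous (homogeneousSubmodule σ k) :=
      (isHomogeneous_span H.le).sup (isHomogeneous_span (by
        rintro _ ⟨i, rfl⟩; exact H'.isHomogeneous i.succ))
    have hB : ∀ᶠ d in atTop, hilbertFunction B d = e ^ (r + 1) :=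
      H'.eventually_hilbertFunction_tail hreg
    rw [hI] at hNJ hIJ ⊢
    have hcolon : (B ⊔ Ideal.span {h' 0}).colon {u' 0} ≤ J :=
      (Submodule.colon_mono hIJ le_rfl).trans (colon_singleton_eq_of_isSMulRegular hreg0).le
    obtain ⟨M, hM⟩ := exists_pow_idealOfVars_le_sup_span_singleton
      (hBhom.sup (isHomogeneous_span_singleton (H'.isHomogeneous 0))) (H'.isHomogeneous_one 0)
      ((Ideal.mul_mono_right hcolon).trans hNJ)
      (hB.mono fun d hd => (hilbertFunction_anti le_sup_left).trans hd.le)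
    have hnext := ih (H'.tail hreg)
    rw [span_sup_span_singleton, sup_right_comm] at hnext
    filter_upwards [hB, hnext, eventually_hilbertFunction_linkage hBhom (H'.isHomogeneous_one 0)
      (H'.isHomogeneous 0) H'.head_mul_head_mem hM] with d hBd hnextd hlink
    have hlink' : (hilbertFunction (B ⊔ Ideal.span {h' 0}) d : ℤ) +
        hilbertFunction (B ⊔ Ideal.span {u' 0}) d = e ^ (r + 1) := by
      rw [hBd] at hlink
      exact_mod_cast hlink
    rw [eq_sub_of_add_eq hlink', sub_mul, hnextd]
    ring

end IsLinearSyzygy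

end LinearSyzygy

section Hypersurface

theorem exists_pow_idealOfVars_le_of_forall_aeval_eq_zero {σ k : Type*} [Finite σ] [Field k]
    (L : Type*) [Field L] [IsAlgClosed L] [Algebra k L] {I : Ideal (MvPolynomial σ k)}
    (h : ∀ x : σ → L, (∀ f ∈ I, aeval x f = 0) → x = 0) : ∃ N, idealOfVars σ k ^ N ≤ I := by
  refine Ideal.exists_pow_le_of_le_radical_of_fg ?_ (IsNoetherian.noetherian _)
  rw [idealOfVars, Ideal.span_le]
  rintro _ ⟨i, rfl⟩
  rw [SetLike.mem_coe, ← vanishingIdeal_zeroLocus_eq_radical (K := L), mem_vanishingIdeal_iff]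
  intro x hx
  rw [h x fun f hf => (mem_zeroLocus_iff.1 hx) f hf, aeval_X, Pi.zero_apply]

variable {k : Type*} [Field k] [Infinite k] {n m : ℕ} {F : MvPolynomial (Fin (n + 1)) k}

theorem depthGE_span_pderiv (hm : m ≠ 0) (hF : F.IsHomogeneous m) (hF0 : F ≠ 0) {N : ℕ}
    (hN : idealOfVars (Fin (n + 1)) k ^ N ≤
      Ideal.span {F} ⊔ Ideal.span (Set.range fun i => pderiv i F)) :
    DepthGE (Submodule.span k (Set.range fun i => pderiv i F)) ⊥ n := by
  have hreg : IsSMulRegular (MvPolynomial (Fin (n + 1)) k ⧸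
      (⊥ : Ideal (MvPolynomial (Fin (n + 1)) k))) F :=
    isSMulRegular_quotient_iff.2 fun s hs => (mul_eq_zero.1 hs).resolve_left hF0
  have hvars : DepthGE (homogeneousSubmodule (Fin (n + 1)) k 1) ⊥ (n + 1) := by
    have := depthGE_homogeneousSubmodule_one (C := ⊥) (r := n + 1) (σ := Fin (n + 1)) (k := k)
      bot_le (by simp)
    simpa using this
  have hmodF : DepthGE (Submodule.span k (Set.range fun i => pderiv i F)) (⊥ ⊔ Ideal.span {F}) n :=
    (hvars.sup_span_singleton hreg).of_pow_le (N := N) (by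
      rwa [span_homogeneousSubmodule_one, bot_sup_eq, Ideal.span, Ideal.span,
        Submodule.span_span_of_tower])
  refine hmodF.of_sup_span_singleton (e := m - 1) ?_ ?_ (Ideal.IsHomogeneous.bot _) hreg
  · rw [Submodule.span_le]
    rintro _ ⟨i, rfl⟩
    exact hF.pderiv
  · exact Ideal.pow_le_self hm (mem_pow_idealOfVars_of_isHomogeneous hF)

theorem isLinearSyzygy_pderiv (hm0 : (m : k) = 0) (hm : m ≠ 0) (hF : F.IsHomogeneous m)
    (hF0 : F ≠ 0) {N : ℕ} (hN : idealOfVars (Fin (n + 1)) k ^ N ≤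
      Ideal.span {F} ⊔ Ideal.span (Set.range fun i => pderiv i F)) :
    IsLinearSyzygy (m - 1) ⊥ X (fun i => pderiv i F) where
  le := bot_le
  finrank_add := by simp
  sup_span := by rw [bot_sup_eq, homogeneousSubmodule_one_eq_span_X]
  isHomogeneous _ := hF.pderiv
  sum_mem := by
    rw [hF.sum_X_mul_pderiv, nsmul_eq_mul, ← C_eq_coe_nat, hm0, C_0, zero_mul]
    exact zero_mem _
  depthGE := by simpa using depthGE_span_pderiv hm hF hF0 hN

end Hypersurface

end CriticalScheme

open CriticalScheme in
theorem stmt16_general {k L : Type*} [Field k] [Infinite k] [Field L] [IsAlgClosed L] [Algebra k L]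
    (n m : ℕ) (hm : 0 < m) (hm0 : (m : k) = 0)
    (F : MvPolynomial (Fin (n + 1)) k) (hhom : F.IsHomogeneous m)
    (hsmooth : ∀ x : Fin (n + 1) → L,
      aeval x F = 0 → (∀ i, aeval x (pderiv i F) = 0) → x = 0) :
    ∃ D : ℕ, ∀ d : ℕ, D ≤ d →
      (hilbertFunction (Ideal.span (Set.range fun i => pderiv i F)) d : ℤ) =
        (((m : ℤ) - 1) ^ (n + 1) - (-1 : ℤ) ^ (n + 1)) / (m : ℤ) := by
  have hF0 : F ≠ 0 := by
    rintro rfl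
    exact one_ne_zero (hsmooth 1 (by simp) (by simp))
  obtain ⟨N, hN⟩ := exists_pow_idealOfVars_le_of_forall_aeval_eq_zero L
    (I := Ideal.span {F} ⊔ Ideal.span (Set.range fun i => pderiv i F)) fun x hx =>
      hsmooth x (hx F (Ideal.mem_sup_left (Ideal.mem_span_singleton_self F))) fun i =>
        hx _ (Ideal.mem_sup_right (Ideal.subset_span ⟨i, rfl⟩))
  obtain ⟨D, hD⟩ := Filter.eventually_atTop.1
    (isLinearSyzygy_pderiv hm0 hm.ne' hhom hF0 hN).eventually_hilbertFunction_mul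
  refine ⟨D, fun d hd => Int.eq_ediv_of_mul_eq_left (by omega) ?_⟩
  have hHd := hD d hd
  rwa [Submodule.bot_coe, Ideal.span_singleton_eq_bot.2 rfl, bot_sup_eq,
    Nat.cast_sub (by omega), Nat.cast_one, sub_add_cancel] at hHd

/-- Let `char k = p > 0` divide `m ≥ 2`, and let `F` be a
homogeneous form of degree `m` in `n+1 ≥ 2` variables defining a smooth
hypersurface in `ℙⁿ`.  Then the critical scheme defined by the ideal
`I = (∂₀F, …, ∂ₙF)` is 0-dimensional of degree
`J_m(n) = ((m−1)^{n+1} − (−1)^{n+1})/m`: for all sufficiently large `d`, the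
`k`-dimension of the degree-`d` homogeneous component of `k[x₀,…,xₙ]/I`
equals `J_m(n)`. -/
theorem stmt16 {k : Type*} [Field k] [IsAlgClosed k]
    (p : ℕ) (hp : 0 < p) (hchar : ringChar k = p)
    (n m : ℕ) (hn : 1 ≤ n) (hm : 2 ≤ m) (hpm : p ∣ m)
    (F : MvPolynomial (Fin (n + 1)) k) (hhom : F.IsHomogeneous m)
    (hsmooth : ∀ x : Fin (n + 1) → k,
      eval x F = 0 → (∀ i, eval x (pderiv i F) = 0) → x = 0) :
    ∃ D : ℕ, ∀ d : ℕ, D ≤ d →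
      (Module.finrank k
          (↥(homogeneousSubmodule (Fin (n + 1)) k d) ⧸
            Submodule.comap (homogeneousSubmodule (Fin (n + 1)) k d).subtype
              (Submodule.restrictScalars k
                  (Ideal.span (Set.range fun i => pderiv i F)) ⊓
                homogeneousSubmodule (Fin (n + 1)) k d)) : ℤ) =
        (((m : ℤ) - 1) ^ (n + 1) - (-1 : ℤ) ^ (n + 1)) / (m : ℤ) := by
  have := IsAlgClosed.instInfinite (K := k)
  exact stmt16_general (L := k) n m (by omega) ((ringChar.spec k m).2 (hchar ▸ hpm)) F hhom hsmooth
end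

section
/- Let k be an algebraically closed field of arbitrary characteristic, and let F ∈ k[x₀,x₁,x₂,x₃] be a homogeneous polynomial of degree 3 such that the cubic surface V(F) is smooth and F is symmetric: F(x_{σ(0)}, x_{σ(1)}, x_{σ(2)}, x_{σ(3)}) = F(x₀,x₁,x₂,x₃) for every permutation σ of {0,1,2,3}. Then there exist a matrix A ∈ GL₄(k) commuting with every 4×4 permutation matrix, λ ∈ kˣ, and c ∈ k such that λ·F(A·x) = x₀³ + x₁³ + x₂³ + x₃³ + c·(x₀x₁x₂ + x₀x₁x₃ + x₀x₂x₃ + x₁x₂x₃). -/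
open MvPolynomial Matrix

/-- The polynomial `F(A·x)`, obtained from `F` by substituting
`xᵢ ↦ ∑ⱼ Aᵢⱼ xⱼ`. -/
noncomputable def substMatrix {k : Type*} [Field k] (A : Matrix (Fin 4) (Fin 4) k)
    (F : MvPolynomial (Fin 4) k) : MvPolynomial (Fin 4) k :=
  aeval (fun i => ∑ j, C (A i j) * X j) F

/-!
The invertible linear maps `1 + vJ`, with `J` the all-ones matrix, commute with permutations, and
substituting one into a symmetric cubic `a p₃ + b p₁ p₂ + c e₃` yields a form of the same kind whose
mixed coefficient is a cubic polynomial in `v`. One needs a root `v` of it with `t = 1 + 4v ≠ 0`.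

In characteristic different from `2`, sixteen times this polynomial equals
`3(a + 4b + c) t³ + (3a + 4b - c) t - 2(3a + c)`, and a polynomial with two nonzero coefficients
has a nonzero root. The linear coefficient is nonzero since `(1, 1, -1, -1)` is not a singular
point, the cubic one, outside characteristic `3`, since `(1, 1, 1, 1)` is not, and in
characteristic `3` the constant one since `(1, 1, 1, 0)` is not. In characteristic `2`, `t = 1` and
the polynomial is quadratic in `v` with leading coefficient `a + 4b + c ≠ 0`.

The transformed form is still nonsingular, so `(1, 0, 0, 0)` is not a singular point, and its
coefficient of `p₃` can be scaled to `1`.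
-/

section Polynomial

open Polynomial

theorem exists_ne_zero_isRoot_of_coeff_ne_zero {k : Type*} [Field k] [IsAlgClosed k] {p : k[X]}
    {m n : ℕ} (hmn : m ≠ n) (hm : p.coeff m ≠ 0) (hn : p.coeff n ≠ 0) :
    ∃ x ≠ 0, p.IsRoot x := by
  by_contra! h
  have hp : p ≠ 0 := fun hp => hm (by rw [hp, Polynomial.coeff_zero])
  have hroots : p.roots = Multiset.replicate p.roots.card 0 :=
    Multiset.eq_replicate_card.2 fun x hx => by_contra fun hx0 => h x hx0 ((mem_roots hp).1 hx)
  have hmonomial : p = Polynomial.C p.leadingCoeff * Polynomial.X ^ p.roots.card := by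
    conv_lhs => rw [(IsAlgClosed.splits p).eq_prod_roots, hroots]
    simp only [Multiset.map_replicate, Multiset.prod_replicate, map_zero, sub_zero]
  rw [hmonomial, coeff_C_mul_X_pow] at hm hn
  exact hmn ((ite_ne_right_iff.1 hm).1.trans (ite_ne_right_iff.1 hn).1.symm)

end Polynomial

section MvPolynomial

variable {ι κ R : Type*}

theorem pderiv_aeval [Fintype ι] [CommSemiring R] (f : ι → MvPolynomial κ R) (j : κ)
    (p : MvPolynomial ι R) :
    pderiv j (aeval f p) = ∑ i, aeval f (pderiv i p) * pderiv j (f i) := by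
  classical
  induction p using MvPolynomial.induction_on with
  | C r => simp
  | add p q hp hq => simp only [map_add, hp, hq, add_mul, Finset.sum_add_distrib]
  | mul_X p i hp =>
    simp only [map_mul, aeval_X, Derivation.leibniz, hp, smul_eq_mul, pderiv_X, Pi.single_apply,
      map_add, add_mul, Finset.sum_add_distrib, Finset.mul_sum]
    congr 1
    · simp
    · exact Finset.sum_congr rfl fun l _ => by ring

theorem isHomogeneous_psum [Fintype ι] [CommSemiring R] (n : ℕ) :
    (psum ι R n).IsHomogeneous n :=
  IsHomogeneous.sum _ _ _ fun i _ => isHomogeneous_X_pow i n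

theorem isHomogeneous_esymm [Fintype ι] [CommSemiring R] (n : ℕ) :
    (esymm ι R n).IsHomogeneous n := by
  refine IsHomogeneous.sum _ _ _ fun s hs => ?_
  simpa [(Finset.mem_powersetCard.1 hs).2] using
    IsHomogeneous.prod s X (fun _ => 1) fun i _ => isHomogeneous_X R i

theorem coeff_mapDomain_perm_of_isSymmetric [CommSemiring R] {F : MvPolynomial ι R}
    (hF : F.IsSymmetric) (σ : Equiv.Perm ι) (d : ι →₀ ℕ) :
    coeff (d.mapDomain σ) F = coeff d F := by
  conv_lhs => rw [← hF σ]
  exact coeff_rename_mapDomain σ σ.injective F d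

theorem eq_of_isSymmetric_of_coeff_eq_of_monotone [CommSemiring R] {n : ℕ}
    {F G : MvPolynomial (Fin n) R} (hF : F.IsSymmetric) (hG : G.IsSymmetric)
    (h : ∀ d : Fin n →₀ ℕ, Monotone d → coeff d F = coeff d G) : F = G := by
  ext d
  set τ := (Tuple.sort d).symm
  have hmono : Monotone (d.mapDomain τ) := by
    have hcomp : d.mapDomain τ = d ∘ Tuple.sort d := by
      ext i
      rw [Finsupp.mapDomain_equiv_apply]
      rfl
    exact hcomp ▸ Tuple.monotone_sort d
  rw [← coeff_mapDomain_perm_of_isSymmetric hF τ, ← coeff_mapDomain_perm_of_isSymmetric hG τ,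
    h _ hmono]

end MvPolynomial

/-- Smoothness of the projective hypersurface `V(F)`, for a form `F` over an algebraically closed
field. The condition `F(x) = 0` is not implied by the vanishing of the partial derivatives when the
characteristic divides the degree. -/
def IsNonsingularForm {ι R : Type*} [CommSemiring R] (F : MvPolynomial ι R) : Prop :=
  ∀ x : ι → R, eval x F = 0 → (∀ i, eval x (pderiv i F) = 0) → x = 0

section substMatrix

variable {k : Type*} [Field k]

theorem eval_substMatrix (A : Matrix (Fin 4) (Fin 4) k) (F : MvPolynomial (Fin 4) k)
    (x : Fin 4 → k) : eval x (substMatrix A F) = eval (A *ᵥ x) F := by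
  induction F using MvPolynomial.induction_on with
  | C r => simp [substMatrix]
  | add p q hp hq => simpa [substMatrix] using congrArg₂ (· + ·) hp hq
  | mul_X p i hp =>
    simpa [substMatrix, mulVec, dotProduct] using congrArg (· * (A *ᵥ x) i) hp

theorem pderiv_substMatrix (A : Matrix (Fin 4) (Fin 4) k) (F : MvPolynomial (Fin 4) k)
    (j : Fin 4) : pderiv j (substMatrix A F) = ∑ i, substMatrix A (pderiv i F) * C (A i j) := by
  simp only [substMatrix, pderiv_aeval, map_sum, pderiv_C_mul, pderiv_X, Pi.single_apply]
  simp

protected theorem IsNonsingularForm.substMatrix {F : MvPolynomial (Fin 4) k}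
    (hF : IsNonsingularForm F) {A : Matrix (Fin 4) (Fin 4) k} (hA : A.det ≠ 0) :
    IsNonsingularForm (substMatrix A F) := by
  intro x hx hdx
  refine eq_zero_of_mulVec_eq_zero hA (hF _ (by rwa [← eval_substMatrix]) (congrFun ?_))
  refine eq_zero_of_vecMul_eq_zero (v := fun i => eval (A *ᵥ x) (pderiv i F)) hA
    (funext fun j => ?_)
  simpa [pderiv_substMatrix, eval_substMatrix, vecMul, dotProduct] using hdx j

end substMatrix

/-- The matrix `1 + v J`, with `J` the all-ones matrix, serving as a change of variables that
commutes with all permutation matrices. -/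
def onesShift {ι R : Type*} [DecidableEq ι] [NonAssocSemiring R] (v : R) : Matrix ι ι R :=
  1 + vecMulVec (fun _ => v) 1

section onesShift

variable {ι R : Type*} [Fintype ι] [DecidableEq ι]

theorem det_onesShift [CommRing R] (v : R) :
    (onesShift v : Matrix ι ι R).det = 1 + Fintype.card ι * v := by
  rw [onesShift, vecMulVec_eq Unit, det_one_add_replicateCol_mul_replicateRow]
  simp [dotProduct]

theorem onesShift_mul_permMatrix [NonAssocSemiring R] (v : R) (σ : Equiv.Perm ι) :
    onesShift v * σ.permMatrix R = σ.permMatrix R * onesShift v := by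
  rw [Equiv.Perm.permMatrix, PEquiv.mul_toMatrix_toPEquiv, PEquiv.toMatrix_toPEquiv_mul]
  ext i j
  simp [onesShift, one_apply, Equiv.eq_symm_apply]

end onesShift

/-- The symmetric cubic form `a p₃ + b p₁ p₂ + c e₃`. Unlike `σ₁³, σ₁σ₂, σ₃`, this basis isolates in
`b` the coefficient of the mixed monomials `xᵢ² xⱼ`, which the normal form lacks. -/
noncomputable def symmetricCubic (ι : Type*) {R : Type*} [Fintype ι] [CommSemiring R] (a b c : R) :
    MvPolynomial ι R :=
  C a * psum ι R 3 + C b * (psum ι R 1 * psum ι R 2) + C c * esymm ι R 3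

section symmetricCubic

variable {ι R : Type*} [Fintype ι]

theorem isSymmetric_symmetricCubic [CommSemiring R] (a b c : R) :
    (symmetricCubic ι a b c).IsSymmetric :=
  (((IsSymmetric.C a).mul (psum_isSymmetric ι R 3)).add
    ((IsSymmetric.C b).mul ((psum_isSymmetric ι R 1).mul (psum_isSymmetric ι R 2)))).add
    ((IsSymmetric.C c).mul (esymm_isSymmetric ι R 3))

theorem isHomogeneous_symmetricCubic [CommSemiring R] (a b c : R) :
    (symmetricCubic ι a b c).IsHomogeneous 3 :=
  (((isHomogeneous_psum 3).C_mul a).add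
    (((isHomogeneous_psum 1).mul (isHomogeneous_psum 2)).C_mul b)).add
    ((isHomogeneous_esymm 3).C_mul c)

theorem smul_symmetricCubic [CommSemiring R] (r a b c : R) :
    r • symmetricCubic ι a b c = symmetricCubic ι (r * a) (r * b) (r * c) := by
  simp only [symmetricCubic, smul_eq_C_mul, C_mul]
  ring

theorem symmetricCubic_fin_four [CommSemiring R] (a b c : R) :
    symmetricCubic (Fin 4) a b c =
      C a * (X 0 ^ 3 + X 1 ^ 3 + X 2 ^ 3 + X 3 ^ 3) +
        C b * ((X 0 + X 1 + X 2 + X 3) * (X 0 ^ 2 + X 1 ^ 2 + X 2 ^ 2 + X 3 ^ 2)) +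
        C c * (X 0 * X 1 * X 2 + X 0 * X 1 * X 3 + X 0 * X 2 * X 3 + X 1 * X 2 * X 3) := by
  have hsubsets : Finset.powersetCard 3 (Finset.univ : Finset (Fin 4)) =
      {{0, 1, 2}, {0, 1, 3}, {0, 2, 3}, {1, 2, 3}} := by decide
  have hesymm : esymm (Fin 4) R 3 =
      X 0 * X 1 * X 2 + X 0 * X 1 * X 3 + X 0 * X 2 * X 3 + X 1 * X 2 * X 3 := by
    rw [esymm, hsubsets, Finset.sum_insert (by decide), Finset.sum_insert (by decide),
      Finset.sum_insert (by decide), Finset.sum_singleton]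
    simp [mul_assoc, add_assoc]
  simp only [symmetricCubic, psum, hesymm, Fin.sum_univ_four, pow_one]

/-- The coefficient of the mixed monomials `xᵢ² xⱼ` in `a p₃ + b p₁ p₂ + c e₃` after substituting
`onesShift v`; the normal form is reached when it vanishes. -/
def mixedCoeff {R : Type*} [CommSemiring R] (a b c v : R) : R :=
  b + (3 * a + 10 * b + 2 * c) * v + 9 * (a + 4 * b + c) * v ^ 2 + 12 * (a + 4 * b + c) * v ^ 3

theorem substMatrix_onesShift_symmetricCubic {k : Type*} [Field k] (a b c v : k) :
    substMatrix (onesShift v) (symmetricCubic (Fin 4) a b c) =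
      symmetricCubic (Fin 4)
        (a - ((4 * b + 2 * c) * v + 6 * (a + 4 * b + c) * v ^ 2 + 8 * (a + 4 * b + c) * v ^ 3))
        (mixedCoeff a b c v)
        (c + 3 * ((4 * b + 2 * c) * v + 6 * (a + 4 * b + c) * v ^ 2
          + 8 * (a + 4 * b + c) * v ^ 3)) := by
  have hcoord (i : Fin 4) : (∑ j, C (onesShift v i j) * X j : MvPolynomial (Fin 4) k) =
      X i + C v * (X 0 + X 1 + X 2 + X 3) := by
    simp [onesShift, one_apply, add_mul, Finset.sum_add_distrib, ← Finset.mul_sum,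
      Fin.sum_univ_four]
  simp only [substMatrix, hcoord, symmetricCubic_fin_four, mixedCoeff, map_add, map_sub, map_mul,
    map_pow, map_ofNat, aeval_X, aeval_C, algebraMap_eq]
  ring

theorem eval_symmetricCubic [CommSemiring R] (a b c : R) (x : Fin 4 → R) :
    eval x (symmetricCubic (Fin 4) a b c) =
      a * (x 0 ^ 3 + x 1 ^ 3 + x 2 ^ 3 + x 3 ^ 3) +
        b * ((x 0 + x 1 + x 2 + x 3) * (x 0 ^ 2 + x 1 ^ 2 + x 2 ^ 2 + x 3 ^ 2)) +
        c * (x 0 * x 1 * x 2 + x 0 * x 1 * x 3 + x 0 * x 2 * x 3 + x 1 * x 2 * x 3) := by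
  simp [symmetricCubic_fin_four]

theorem eval_pderiv_symmetricCubic [CommRing R] (a b c : R) (x : Fin 4 → R) (i : Fin 4) :
    eval x (pderiv i (symmetricCubic (Fin 4) a b c)) =
      3 * a * x i ^ 2 + b * (∑ j, x j ^ 2 + 2 * x i * ∑ j, x j) +
        c * (x 0 * x 1 + x 0 * x 2 + x 0 * x 3 + x 1 * x 2 + x 1 * x 3 + x 2 * x 3
          - x i * ∑ j, x j + x i ^ 2) := by
  rw [symmetricCubic_fin_four]
  fin_cases i <;>
  · simp only [Fin.zero_eta, Fin.mk_one, Fin.reduceFinMk, map_add, map_mul, map_pow,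
      Derivation.leibniz, Derivation.leibniz_pow, derivation_C, pderiv_X, Pi.single_apply,
      Fin.reduceEq, zero_ne_one, one_ne_zero, reduceIte, smul_eq_mul, nsmul_eq_mul, Nat.cast_ofNat,
      Nat.add_one_sub_one, pow_one, map_zero, map_one, eval_C, eval_ofNat, eval_X,
      Fin.sum_univ_four]
    ring

theorem coeff_cube_symmetricCubic [CommSemiring R] (a b c : R) :
    coeff (.single 3 3) (symmetricCubic (Fin 4) a b c) = a + b := by
  simp [symmetricCubic_fin_four, mul_add, add_mul, X, monomial_pow, monomial_mul, C_mul_monomial,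
    coeff_monomial, Finsupp.ext_iff, Fin.forall_fin_succ, Finsupp.single_apply]

theorem coeff_mixed_symmetricCubic [CommSemiring R] (a b c : R) :
    coeff (.single 2 1 + .single 3 2) (symmetricCubic (Fin 4) a b c) = b := by
  simp [symmetricCubic_fin_four, mul_add, add_mul, X, monomial_pow, monomial_mul, C_mul_monomial,
    coeff_monomial, Finsupp.ext_iff, Fin.forall_fin_succ, Finsupp.single_apply]

theorem coeff_squarefree_symmetricCubic [CommSemiring R] (a b c : R) :
    coeff (.single 1 1 + .single 2 1 + .single 3 1) (symmetricCubic (Fin 4) a b c) = c := by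
  simp [symmetricCubic_fin_four, mul_add, add_mul, X, monomial_pow, monomial_mul, C_mul_monomial,
    coeff_monomial, Finsupp.ext_iff, Fin.forall_fin_succ, Finsupp.single_apply]

theorem eq_of_monotone_of_degree_eq_three {d : Fin 4 →₀ ℕ} (hd : Monotone d)
    (hdeg : d.degree = 3) :
    d = .single 3 3 ∨ d = .single 2 1 + .single 3 2 ∨
      d = .single 1 1 + .single 2 1 + .single 3 1 := by
  have h01 : d 0 ≤ d 1 := hd (by decide)
  have h12 : d 1 ≤ d 2 := hd (by decide)
  have h23 : d 2 ≤ d 3 := hd (by decide)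
  rw [Finsupp.degree_eq_sum, Fin.sum_univ_four] at hdeg
  simp only [Fin.isValue, Finsupp.ext_iff, Finsupp.single_apply, Fin.forall_fin_succ, Fin.reduceEq,
    ↓reduceIte, Fin.succ_zero_eq_one, Fin.succ_one_eq_two, Fin.reduceSucc, IsEmpty.forall_iff,
    and_true, Finsupp.coe_add, Pi.add_apply, add_zero, zero_add, one_ne_zero]
  omega

theorem exists_eq_symmetricCubic [CommRing R] {F : MvPolynomial (Fin 4) R}
    (hhom : F.IsHomogeneous 3) (hsymm : F.IsSymmetric) :
    ∃ a b c : R, F = symmetricCubic (Fin 4) a b c := by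
  refine ⟨coeff (.single 3 3) F - coeff (.single 2 1 + .single 3 2) F,
    coeff (.single 2 1 + .single 3 2) F,
    coeff (.single 1 1 + .single 2 1 + .single 3 1) F, ?_⟩
  refine eq_of_isSymmetric_of_coeff_eq_of_monotone hsymm (isSymmetric_symmetricCubic _ _ _)
    fun d hd => ?_
  by_cases hdeg : d.degree = 3
  swap
  · rw [hhom.coeff_eq_zero hdeg, (isHomogeneous_symmetricCubic _ _ _).coeff_eq_zero hdeg]
  rcases eq_of_monotone_of_degree_eq_three hd hdeg with rfl | rfl | rfl
  · rw [coeff_cube_symmetricCubic, sub_add_cancel]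
  · rw [coeff_mixed_symmetricCubic]
  · rw [coeff_squarefree_symmetricCubic]

end symmetricCubic

namespace IsNonsingularForm

section

variable {R : Type*} [CommRing R] [Nontrivial R] {a b c : R}

theorem add_four_mul_add_ne_zero (hF : IsNonsingularForm (symmetricCubic (Fin 4) a b c)) :
    a + 4 * b + c ≠ 0 := by
  intro h
  refine one_ne_zero (congrFun (hF 1 ?_ fun i => ?_) 0)
  · simp only [eval_symmetricCubic, Pi.one_apply]
    linear_combination 4 * h
  · simp only [eval_pderiv_symmetricCubic, Fin.sum_univ_four, Pi.one_apply]
    linear_combination 3 * h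

theorem three_mul_add_four_mul_sub_ne_zero
    (hF : IsNonsingularForm (symmetricCubic (Fin 4) a b c)) : 3 * a + 4 * b - c ≠ 0 := by
  intro h
  refine one_ne_zero (congrFun (hF ![1, 1, -1, -1] ?_ fun i => ?_) 0)
  · simp only [eval_symmetricCubic, Matrix.cons_val]
    ring
  · rw [eval_pderiv_symmetricCubic]
    match i with
    | 0 | 1 | 2 | 3 =>
      simp only [Fin.sum_univ_four, Matrix.cons_val]
      linear_combination h

theorem esymm_coeff_ne_zero_of_three_eq_zero
    (hF : IsNonsingularForm (symmetricCubic (Fin 4) a b c)) (h3 : (3 : R) = 0) : c ≠ 0 := by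
  intro hc
  refine one_ne_zero (congrFun (hF ![1, 1, 1, 0] ?_ fun i => ?_) 0)
  · simp only [eval_symmetricCubic, Matrix.cons_val]
    linear_combination (a + 3 * b) * h3 + hc
  · rw [eval_pderiv_symmetricCubic]
    match i with
    | 0 | 1 | 2 =>
      simp only [Fin.sum_univ_four, Matrix.cons_val]
      linear_combination (a + 3 * b) * h3 + hc
    | 3 =>
      simp only [Fin.sum_univ_four, Matrix.cons_val]
      linear_combination b * h3 + 3 * hc

theorem psum_coeff_ne_zero (hF : IsNonsingularForm (symmetricCubic (Fin 4) a 0 c)) :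
    a ≠ 0 := by
  rintro rfl
  refine one_ne_zero (congrFun (hF ![1, 0, 0, 0] ?_ fun i => ?_) 0)
  · simp [eval_symmetricCubic]
  · rw [eval_pderiv_symmetricCubic]
    fin_cases i <;> simp [Fin.sum_univ_four]

end

section

variable {k : Type*} [Field k] [IsAlgClosed k] {a b c : k}

theorem exists_mixedCoeff_eq_zero_of_two_eq_zero
    (hF : IsNonsingularForm (symmetricCubic (Fin 4) a b c)) (h2 : (2 : k) = 0) :
    ∃ v, mixedCoeff a b c v = 0 := by
  obtain ⟨v, hv⟩ := IsAlgClosed.exists_root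
    (.C (a + 4 * b + c) * .X ^ 2 + .C a * .X + .C b)
    (by rw [Polynomial.degree_quadratic hF.add_four_mul_add_ne_zero]; decide)
  simp only [Polynomial.IsRoot, Polynomial.eval_add, Polynomial.eval_mul, Polynomial.eval_C,
    Polynomial.eval_pow, Polynomial.eval_X] at hv
  refine ⟨v, ?_⟩
  rw [mixedCoeff]
  linear_combination hv + ((a + 5 * b + c) * v + 4 * (a + 4 * b + c) * v ^ 2
    + 6 * (a + 4 * b + c) * v ^ 3) * h2

theorem exists_mixedCoeff_eq_zero_of_two_ne_zero
    (hF : IsNonsingularForm (symmetricCubic (Fin 4) a b c)) (h2 : (2 : k) ≠ 0) :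
    ∃ v, 1 + 4 * v ≠ 0 ∧ mixedCoeff a b c v = 0 := by
  let P : Cubic k := ⟨3 * (a + 4 * b + c), 0, 3 * a + 4 * b - c, -2 * (3 * a + c)⟩
  have hlinear : P.toPoly.coeff 1 ≠ 0 := by
    rw [Cubic.coeff_eq_c]
    exact hF.three_mul_add_four_mul_sub_ne_zero
  obtain ⟨t, ht, hroot⟩ : ∃ t ≠ 0, P.toPoly.IsRoot t := by
    by_cases h3 : (3 : k) = 0
    · have hconst : P.toPoly.coeff 0 ≠ 0 := by
        simpa [Cubic.coeff_eq_d, P, h2, h3] using hF.esymm_coeff_ne_zero_of_three_eq_zero h3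
      exact exists_ne_zero_isRoot_of_coeff_ne_zero one_ne_zero hlinear hconst
    · have hcubic : P.toPoly.coeff 3 ≠ 0 := by
        rw [Cubic.coeff_eq_a]
        exact mul_ne_zero h3 hF.add_four_mul_add_ne_zero
      exact exists_ne_zero_isRoot_of_coeff_ne_zero (by decide) hlinear hcubic
  have h4 : (4 : k) ≠ 0 := by
    rw [show (4 : k) = 2 * 2 by norm_num]
    exact mul_ne_zero h2 h2
  obtain ⟨v, rfl⟩ : ∃ v, t = 1 + 4 * v := ⟨(t - 1) / 4, by field_simp; ring⟩
  refine ⟨v, ht, mul_left_cancel₀ (mul_ne_zero h4 h4) ?_⟩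
  simp only [P, Cubic.toPoly, Polynomial.IsRoot, Polynomial.eval_add, Polynomial.eval_mul,
    Polynomial.eval_C, Polynomial.eval_pow, Polynomial.eval_X] at hroot
  rw [mixedCoeff]
  linear_combination hroot

theorem exists_substMatrix_eq_symmetricCubic_zero
    (hF : IsNonsingularForm (symmetricCubic (Fin 4) a b c)) :
    ∃ v a' c' : k, 1 + 4 * v ≠ 0 ∧
      substMatrix (onesShift v) (symmetricCubic (Fin 4) a b c) =
        symmetricCubic (Fin 4) a' 0 c' := by
  obtain ⟨v, hv, hmixed⟩ : ∃ v, 1 + 4 * v ≠ 0 ∧ mixedCoeff a b c v = 0 := by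
    by_cases h2 : (2 : k) = 0
    · obtain ⟨v, hmixed⟩ := hF.exists_mixedCoeff_eq_zero_of_two_eq_zero h2
      refine ⟨v, ?_, hmixed⟩
      have h4 : (4 : k) = 0 := by linear_combination 2 * h2
      simp [h4]
    · exact hF.exists_mixedCoeff_eq_zero_of_two_ne_zero h2
  exact ⟨v, _, _, hv, by rw [substMatrix_onesShift_symmetricCubic, hmixed]⟩

end

end IsNonsingularForm

/-- Every smooth cubic surface defined by a symmetric cubic
form can be brought, by a linear change of variables commuting with all
permutation matrices and a scaling, to the normal form
`x₀³+x₁³+x₂³+x₃³ + c·(x₀x₁x₂ + x₀x₁x₃ + x₀x₂x₃ + x₁x₂x₃)`. -/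
theorem stmt17 {k : Type*} [Field k] [IsAlgClosed k]
    (F : MvPolynomial (Fin 4) k) (hF0 : F ≠ 0) (hhom : F.IsHomogeneous 3)
    (hsmooth : ∀ x : Fin 4 → k,
      eval x F = 0 → (∀ i, eval x (pderiv i F) = 0) → x = 0)
    (hsymm : ∀ σ : Equiv.Perm (Fin 4), rename σ F = F) :
    ∃ (A : Matrix (Fin 4) (Fin 4) k) (lam : kˣ) (c : k),
      IsUnit A.det ∧
      (∀ σ : Equiv.Perm (Fin 4), A * σ.permMatrix k = σ.permMatrix k * A) ∧
      (lam : k) • substMatrix A F =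
        X 0 ^ 3 + X 1 ^ 3 + X 2 ^ 3 + X 3 ^ 3 +
          C c * (X 0 * X 1 * X 2 + X 0 * X 1 * X 3 +
            X 0 * X 2 * X 3 + X 1 * X 2 * X 3) := by
  obtain ⟨a, b, c, rfl⟩ := exists_eq_symmetricCubic hhom hsymm
  have hF : IsNonsingularForm (symmetricCubic (Fin 4) a b c) := hsmooth
  obtain ⟨v, a', c', hv, hsubst⟩ := hF.exists_substMatrix_eq_symmetricCubic_zero
  have hdet : (onesShift v : Matrix (Fin 4) (Fin 4) k).det ≠ 0 := by simpa [det_onesShift] using hv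
  have ha' : a' ≠ 0 := (hsubst ▸ hF.substMatrix hdet).psum_coeff_ne_zero
  refine ⟨onesShift v, (Units.mk0 a' ha')⁻¹, a'⁻¹ * c', hdet.isUnit,
    onesShift_mul_permMatrix v, ?_⟩
  rw [hsubst, smul_symmetricCubic, symmetricCubic_fin_four]
  simp [ha']
end

section
/- Let k be an algebraically closed field of characteristic 2 and let S ⊂ ℙ¹(k) be a set of exactly 5 points. Let G = {g ∈ PGL₂(k) : g·S = S} be the setwise stabilizer of S under the natural action of PGL₂(k) on ℙ¹(k). Then G is a finite group isomorphic (as an abstract group) to exactly one of: the trivial group, the Klein four-group (ℤ/2ℤ)², or the alternating group A₅. -/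
open Pointwise

/-- The subgroup of scalar matrices in `GL₂(k)`; `PGL₂(k)` is the quotient of
`GL₂(k)` by this subgroup. -/
def scalarSubgroup2 (k : Type*) [Field k] : Subgroup (GL (Fin 2) k) :=
  (Units.map (algebraMap k (Matrix (Fin 2) (Fin 2) k)).toMonoidHom).range

instance scalarSubgroup2_normal (k : Type*) [Field k] :
    (scalarSubgroup2 k).Normal := by
  constructor
  rintro u ⟨c, rfl⟩ g
  refine ⟨c, ?_⟩
  have h : (g : Matrix (Fin 2) (Fin 2) k) *
      (algebraMap k (Matrix (Fin 2) (Fin 2) k) (c : k)) *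
        ((g⁻¹ : GL (Fin 2) k) : Matrix (Fin 2) (Fin 2) k) =
      algebraMap k (Matrix (Fin 2) (Fin 2) k) (c : k) := by
    rw [← Algebra.commutes (c : k) (g : Matrix (Fin 2) (Fin 2) k), mul_assoc]
    have h1 : (g : Matrix (Fin 2) (Fin 2) k) *
        ((g⁻¹ : GL (Fin 2) k) : Matrix (Fin 2) (Fin 2) k) = 1 := by
      rw [← Units.val_mul, mul_inv_cancel, Units.val_one]
    rw [h1, mul_one]
  apply Units.ext
  simpa using h.symm

lemma toLin'_GL_injective {k : Type*} [Field k] (A : GL (Fin 2) k) :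
    Function.Injective (Matrix.toLin' (A : Matrix (Fin 2) (Fin 2) k)) := by
  have h : ∀ x, Matrix.toLin' ((A⁻¹ : GL (Fin 2) k) : Matrix (Fin 2) (Fin 2) k)
      (Matrix.toLin' (A : Matrix (Fin 2) (Fin 2) k) x) = x := by
    intro x
    rw [← Matrix.toLin'_mul_apply, ← Units.val_mul, inv_mul_cancel, Units.val_one,
      Matrix.toLin'_one, LinearMap.id_apply]
  exact Function.LeftInverse.injective h

/-- The action of `GL₂(k)` on the projective line `ℙ¹(k)`. -/
noncomputable instance glActionP1 (k : Type*) [Field k] :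
    MulAction (GL (Fin 2) k) (Projectivization k (Fin 2 → k)) where
  smul A p := Projectivization.map
    (Matrix.toLin' (A : Matrix (Fin 2) (Fin 2) k)) (toLin'_GL_injective A) p
  one_smul p := by
    induction p using Projectivization.ind with
    | h v hv =>
      show Projectivization.mk k
        (Matrix.toLin' ((1 : GL (Fin 2) k) : Matrix (Fin 2) (Fin 2) k) v) _ =
          Projectivization.mk k v hv
      rw [Projectivization.mk_eq_mk_iff]
      exact ⟨1, by simp [Units.val_one, Matrix.toLin'_one]⟩
  mul_smul A B p := by
    induction p using Projectivization.ind with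
    | h v hv =>
      show Projectivization.mk k
        (Matrix.toLin' (((A * B : GL (Fin 2) k)) : Matrix (Fin 2) (Fin 2) k) v) _ =
        Projectivization.mk k
          (Matrix.toLin' (A : Matrix (Fin 2) (Fin 2) k)
            (Matrix.toLin' (B : Matrix (Fin 2) (Fin 2) k) v)) _
      rw [Projectivization.mk_eq_mk_iff]
      exact ⟨1, by simp [Units.val_mul, Matrix.toLin'_mul_apply]⟩

lemma glActionP1_smul_mk {k : Type*} [Field k] (A : GL (Fin 2) k)
    (v : Fin 2 → k) (hv : v ≠ 0) :
    A • Projectivization.mk k v hv =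
      Projectivization.mk k (Matrix.toLin' (A : Matrix (Fin 2) (Fin 2) k) v)
        (fun h => hv (toLin'_GL_injective A (h.trans (map_zero _).symm))) := rfl

/-- The induced action of `PGL₂(k)` on the projective line `ℙ¹(k)`, by
fractional linear transformations. -/
noncomputable instance pglActionP1 (k : Type*) [Field k] :
    MulAction (GL (Fin 2) k ⧸ scalarSubgroup2 k)
      (Projectivization k (Fin 2 → k)) where
  smul g p := Quotient.liftOn' g (fun A => A • p) (fun A B hAB => by
    rw [QuotientGroup.leftRel_apply] at hAB
    obtain ⟨c, hc⟩ := hAB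
    have hB : B = A * Units.map (algebraMap k (Matrix (Fin 2) (Fin 2) k)).toMonoidHom c := by
      rw [hc, mul_inv_cancel_left]
    have hu : (Units.map (algebraMap k (Matrix (Fin 2) (Fin 2) k)).toMonoidHom c) • p = p := by
      induction p using Projectivization.ind with
      | h v hv =>
        rw [glActionP1_smul_mk, Projectivization.mk_eq_mk_iff]
        refine ⟨c, ?_⟩
        show (c : k) • v = _
        have : ((Units.map (algebraMap k (Matrix (Fin 2) (Fin 2) k)).toMonoidHom c :
            GL (Fin 2) k) : Matrix (Fin 2) (Fin 2) k) = (c : k) • (1 : Matrix (Fin 2) (Fin 2) k) := by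
          simp [Algebra.algebraMap_eq_smul_one]
        rw [this, map_smul, Matrix.toLin'_one]
        simp
    show A • p = B • p
    rw [hB, mul_smul, hu])
  one_smul p := by
    show (1 : GL (Fin 2) k) • p = p
    exact one_smul _ p
  mul_smul g h p := by
    refine Quotient.inductionOn₂' g h (fun A B => ?_)
    show (A * B : GL (Fin 2) k) • p = A • (B • p)
    exact mul_smul A B p

/-!
Label the five points. Since only the identity of `PGL₂(k)` fixes three points, the stabilizer of
`S` embeds in `S₅` with image `H`, and `H` contains no transposition. A double transposition `τ` of
the points other than `f` is induced, off `f`, by a unique projectivity `t`, so `τ ∈ H` as soon as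
`t` fixes `f`. There are two ways to see this. If `H` contains an involution with the same fixed
point `f`, then `t` commutes with the corresponding projectivity, which in characteristic 2 has
only one fixed point, so `t` preserves that point. If `σ ∈ H` moves `f` and `σ τ σ = τ`, then the
projectivity inducing `σ` satisfies the same relation with `t`, and evaluating it at the preimage
of `f` shows that `t` fixes `f`.

Every nontrivial `H` therefore contains the whole Klein four-group `V_f` of double transpositions
avoiding some point `f`. If `H` fixes `f`, then `H = V_f`. Otherwise conjugating `V_f` produces all
double transpositions, so `H` contains `A₅`, and `H = A₅` because it has no transpositions.
-/

section PointReflections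

open Equiv

/-- `τ` is an involution whose only fixed point is `f`. On five points these are the three
double transpositions of the points other than `f`. -/
def IsPointReflection {ι : Type*} (τ : Perm ι) (f : ι) : Prop :=
  τ * τ = 1 ∧ ∀ i, τ i = i ↔ i = f

instance {ι : Type*} [Fintype ι] [DecidableEq ι] (τ : Perm ι) (f : ι) :
    Decidable (IsPointReflection τ f) := by
  unfold IsPointReflection; infer_instance

instance {ι : Type*} [Fintype ι] [DecidableEq ι] (σ : Perm ι) : Decidable σ.IsSwap := by
  unfold Perm.IsSwap; infer_instance

lemma IsPointReflection.conj {ι : Type*} {τ : Perm ι} {f : ι} (hτ : IsPointReflection τ f)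
    (σ : Perm ι) : IsPointReflection (σ * τ * σ⁻¹) (σ f) := by
  refine ⟨?_, fun i ↦ ?_⟩
  · rw [conj_mul, hτ.1, mul_one, mul_inv_cancel]
  · rw [Perm.mul_apply, Perm.mul_apply, ← Perm.eq_inv_iff_eq, hτ.2, Perm.inv_eq_iff_eq]

variable {σ τ : Perm (Fin 5)} {f : Fin 5}

lemma IsPointReflection.mul_comm (hσ : IsPointReflection σ f) (hτ : IsPointReflection τ f) :
    σ * τ = τ * σ := by
  revert f σ τ; decide +kernel

lemma IsPointReflection.exists_pairs (hτ : IsPointReflection τ f) :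
    ∃ a b, [a, τ a, b, τ b].Nodup ∧ ∀ i ≠ f, i ∈ [a, τ a, b, τ b] := by
  revert f τ; decide +kernel

lemma exists_isPointReflection_apply_eq {i j : Fin 5} (hi : i ≠ f) (hj : j ≠ f) (hij : i ≠ j) :
    ∃ τ, IsPointReflection τ f ∧ τ i = j := by
  revert f i j; decide +kernel

lemma isPointReflection_of_cycleType (hτ : τ.cycleType = {2, 2}) :
    ∃ f, IsPointReflection τ f := by
  have hsq : τ * τ = 1 := by
    rw [← sq, ← orderOf_dvd_iff_pow_eq_one, ← Perm.lcm_cycleType, hτ]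
    decide
  have hcard : τ.supportᶜ.card = 1 := by
    rw [Finset.card_compl, ← Perm.sum_cycleType, hτ]
    rfl
  obtain ⟨f, hf⟩ := Finset.card_eq_one.mp hcard
  refine ⟨f, hsq, fun i ↦ ?_⟩
  rw [← Perm.notMem_support, ← Finset.mem_compl, hf, Finset.mem_singleton]

lemma exists_isPointReflection_of_ne_one (hσ : σ ≠ 1) :
    (σ.IsSwap ∨ (σ ^ 3).IsSwap) ∨
      (∃ f, IsPointReflection σ f ∨ IsPointReflection (σ ^ 2) f) ∨
      ∃ f τ, σ f ≠ f ∧ IsPointReflection τ f ∧ σ * τ * σ = τ := by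
  revert σ; decide +kernel

lemma exists_isPointReflection_of_apply_eq_self (hσ : σ f = f) :
    (σ = 1 ∨ IsPointReflection σ f) ∨
      (σ.IsSwap ∨ ∃ τ, IsPointReflection τ f ∧ (τ * σ).IsSwap) ∨
      ∃ f' τ, f' ≠ f ∧ σ f' ≠ f' ∧ IsPointReflection τ f' ∧ σ * τ * σ = τ := by
  revert f σ; decide +kernel

lemma card_eq_one_or_isPointReflection (f : Fin 5) :
    Fintype.card {σ : Perm (Fin 5) // σ = 1 ∨ IsPointReflection σ f} = 4 := by
  revert f; decide +kernel

lemma isKleinFour_of_mem_iff {H : Subgroup (Perm (Fin 5))}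
    (hH : ∀ σ, σ ∈ H ↔ σ = 1 ∨ IsPointReflection σ f) : IsKleinFour H := by
  have hcard : Nat.card H = 4 := by
    rw [Nat.card_congr (Equiv.subtypeEquivRight hH), Nat.card_eq_fintype_card,
      card_eq_one_or_isPointReflection]
  have : Nontrivial H := Finite.one_lt_card_iff_nontrivial.mp (by omega)
  refine ⟨hcard, (Nat.dvd_prime Nat.prime_two).mp ?_ |>.resolve_left ?_⟩
  · refine Monoid.exponent_dvd_of_forall_pow_eq_one fun σ ↦ Subtype.ext ?_
    rw [Subgroup.coe_pow, Subgroup.coe_one, sq]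
    rcases (hH σ).mp σ.2 with h | h
    · rw [h, one_mul]
    · exact h.1
  · rw [Monoid.exp_eq_one_iff]
    exact not_subsingleton H

lemma eq_alternatingGroup_of_le {α : Type*} [Fintype α] [DecidableEq α] {H : Subgroup (Perm α)}
    (hle : alternatingGroup α ≤ H) (hswap : ∀ σ ∈ H, ¬σ.IsSwap) : H = alternatingGroup α := by
  refine hle.antisymm' fun σ hσ ↦ ?_
  by_contra hodd
  obtain ⟨i, hi⟩ : ∃ i, σ i ≠ i := by
    by_contra! h
    exact hodd ((Perm.ext h : σ = 1) ▸ one_mem _)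
  have hs : (swap i (σ i)).IsSwap := ⟨i, σ i, hi.symm, rfl⟩
  have hmem : swap i (σ i) * σ⁻¹ ∈ H := by
    refine hle ?_
    rw [Perm.mem_alternatingGroup, Perm.sign_mul, hs.sign_eq, Perm.sign_inv,
      (Int.units_eq_one_or _).resolve_left hodd, neg_mul_neg, one_mul]
  exact hswap _ (by simpa using mul_mem hmem hσ) hs

/-- The combinatorial constraints that the geometry of the projective line in characteristic `2`
imposes on the group of permutations of five of its points induced by projectivities. -/
structure ReflectionClosed (H : Subgroup (Perm (Fin 5))) : Prop where
  not_isSwap : ∀ σ ∈ H, ¬σ.IsSwap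
  mem_of_common_fixedPoint : ∀ σ ∈ H, ∀ τ f,
    IsPointReflection σ f → IsPointReflection τ f → τ ∈ H
  mem_of_mul_mul_eq : ∀ σ ∈ H, ∀ τ f,
    σ f ≠ f → IsPointReflection τ f → σ * τ * σ = τ → τ ∈ H

namespace ReflectionClosed

variable {H : Subgroup (Perm (Fin 5))}

lemma exists_isPointReflection_mem (hH : ReflectionClosed H) (hbot : H ≠ ⊥) :
    ∃ f, ∃ τ ∈ H, IsPointReflection τ f := by
  obtain ⟨σ, hσ, hne⟩ := H.bot_or_exists_ne_one.resolve_left hbot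
  rcases exists_isPointReflection_of_ne_one hne with
    (hswap | hswap) | ⟨f, hf | hf⟩ | ⟨f, τ, hf, hτ, hinv⟩
  · exact absurd hswap (hH.not_isSwap _ hσ)
  · exact absurd hswap (hH.not_isSwap _ (pow_mem hσ 3))
  · exact ⟨f, σ, hσ, hf⟩
  · exact ⟨f, σ ^ 2, pow_mem hσ 2, hf⟩
  · exact ⟨f, τ, hH.mem_of_mul_mul_eq σ hσ τ f hf hτ hinv, hτ⟩

lemma isKleinFour (hH : ReflectionClosed H) (hf : ∀ τ, IsPointReflection τ f → τ ∈ H)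
    (hfix : ∀ σ ∈ H, σ f = f) : IsKleinFour H := by
  refine isKleinFour_of_mem_iff (f := f) fun σ ↦ ⟨fun hσ ↦ ?_, ?_⟩
  · rcases exists_isPointReflection_of_apply_eq_self (hfix σ hσ) with
      h | (hswap | ⟨τ, hτ, hswap⟩) | ⟨f', τ, hne, hf', hτ, hinv⟩
    · exact h
    · exact absurd hswap (hH.not_isSwap _ hσ)
    · exact absurd hswap (hH.not_isSwap _ (mul_mem (hf τ hτ) hσ))
    · have hmem := hH.mem_of_mul_mul_eq σ hσ τ f' hf' hτ hinv
      exact absurd ((hτ.2 f).mp (hfix τ hmem)) hne.symm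
  · rintro (rfl | hσ)
    exacts [one_mem H, hf σ hσ]

lemma eq_alternatingGroup (hH : ReflectionClosed H) (hf : ∀ τ, IsPointReflection τ f → τ ∈ H)
    (hσ : σ ∈ H) (hσf : σ f ≠ f) : H = alternatingGroup (Fin 5) := by
  have hconj {i : Fin 5} (hi : ∀ τ, IsPointReflection τ i → τ ∈ H) {ρ} (hρ : ρ ∈ H) (τ)
      (hτ : IsPointReflection τ (ρ i)) : τ ∈ H := by
    have hmem : ρ⁻¹ * τ * ρ ∈ H := hi _ (by simpa using hτ.conj ρ⁻¹)
    simpa [mul_assoc] using mul_mem (mul_mem hρ hmem) (inv_mem hρ)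
  have hall (i : Fin 5) : ∀ τ, IsPointReflection τ i → τ ∈ H := by
    rcases eq_or_ne i f with rfl | hi
    · exact hf
    rcases eq_or_ne (σ f) i with rfl | hne
    · exact hconj hf hσ
    obtain ⟨ρ, hρ, rfl⟩ := exists_isPointReflection_apply_eq hσf hi hne
    exact hconj (hconj hf hσ) (hf ρ hρ)
  refine eq_alternatingGroup_of_le ?_ hH.not_isSwap
  rw [← Perm.closure_cycleType_eq_two_two_eq_alternatingGroup (by simp), Subgroup.closure_le]
  intro τ hτ
  obtain ⟨i, hi⟩ := isPointReflection_of_cycleType hτ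
  exact hall i τ hi

theorem eq_bot_or_isKleinFour_or_eq_alternatingGroup (hH : ReflectionClosed H) :
    H = ⊥ ∨ IsKleinFour H ∨ H = alternatingGroup (Fin 5) := by
  refine or_iff_not_imp_left.mpr fun hbot ↦ ?_
  obtain ⟨f, τ, hτ, hτf⟩ := hH.exists_isPointReflection_mem hbot
  have hf (ρ) : IsPointReflection ρ f → ρ ∈ H := hH.mem_of_common_fixedPoint τ hτ ρ f hτf
  by_cases hfix : ∀ σ ∈ H, σ f = f
  · exact Or.inl (hH.isKleinFour hf hfix)
  · push Not at hfix
    obtain ⟨σ, hσ, hσf⟩ := hfix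
    exact Or.inr (hH.eq_alternatingGroup hf hσ hσf)

end ReflectionClosed

end PointReflections

section Action

open Equiv MulAction

/-- Only the identity fixes three points: the uniqueness half of sharp `3`-transitivity. -/
def TrivialTripleStabilizers (P X : Type*) [Group P] [MulAction P X] : Prop :=
  ∀ (g : P) (x : Fin 3 → X), Function.Injective x → (∀ i, g • x i = x i) → g = 1

/-- Any two disjoint pairs of points are exchanged simultaneously, each within itself, by some
group element. -/
def ExchangesPairs (P X : Type*) [Group P] [MulAction P X] : Prop :=
  ∀ a b c d : X, [a, b, c, d].Nodup → ∃ g : P, g • a = b ∧ g • b = a ∧ g • c = d ∧ g • d = c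

/-- An involution in `P` fixes at most one point. For `PGL₂` on the projective line, this is
special to characteristic `2`. -/
def InvolutionsFixAtMostOne (P X : Type*) [Group P] [MulAction P X] : Prop :=
  ∀ g : P, g * g = 1 → g ≠ 1 → (fixedBy X g).Subsingleton

variable {P X : Type*} [Group P] [MulAction P X]

section Labelling

variable {ι : Type*} {S : Set X} (e : ι ≃ S)

/-- The permutation action of the stabilizer of `S` on labels for the points of `S`. -/
def labelPermHom : stabilizer P S →* Perm ι :=
  e.symm.permCongrHom.toMonoidHom.comp (toPermHom (stabilizer P S) S)

lemma coe_labelPermHom_apply (g : stabilizer P S) (i : ι) :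
    (e (labelPermHom e g i) : X) = (g : P) • (e i : X) := by
  simp [labelPermHom]

lemma mem_range_labelPermHom {σ : Perm ι} :
    σ ∈ (labelPermHom (P := P) e).range ↔ ∃ g : P, ∀ i, g • (e i : X) = e (σ i) := by
  constructor
  · rintro ⟨g, rfl⟩
    exact ⟨g, fun i ↦ (coe_labelPermHom_apply e g i).symm⟩
  · rintro ⟨g, hg⟩
    have hmem : g ∈ stabilizer P S := by
      rw [mem_stabilizer_iff]
      ext x
      rw [Set.mem_smul_set]
      constructor
      · rintro ⟨y, hy, rfl⟩
        simpa [← hg] using (e (σ (e.symm ⟨y, hy⟩))).2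
      · intro hx
        exact ⟨e (σ⁻¹ (e.symm ⟨x, hx⟩)), Subtype.coe_prop _, by simp [hg]⟩
    refine ⟨⟨g, hmem⟩, Perm.ext fun i ↦ e.injective (Subtype.ext ?_)⟩
    rw [coe_labelPermHom_apply, hg]

end Labelling

lemma TrivialTripleStabilizers.eq_of_forall_smul_eq (hP : TrivialTripleStabilizers P X)
    {x : Fin 5 → X} (hx : Function.Injective x) {g h : P} (f f' : Fin 5)
    (hgh : ∀ i, i ≠ f → i ≠ f' → g • x i = h • x i) : g = h := by
  obtain ⟨j, hj⟩ : ∃ j : Fin 3 → Fin 5, Function.Injective j ∧ ∀ i, j i ≠ f ∧ j i ≠ f' := by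
    clear hgh
    revert f f'; decide +kernel
  refine (inv_mul_eq_one.mp (hP (h⁻¹ * g) (x ∘ j) (hx.comp hj.1) fun i ↦ ?_)).symm
  rw [mul_smul, inv_smul_eq_iff]
  exact hgh _ (hj.2 i).1 (hj.2 i).2

lemma ExchangesPairs.exists_smul_eq (hP : ExchangesPairs P X) {x : Fin 5 → X}
    (hx : Function.Injective x) {τ : Perm (Fin 5)} {f : Fin 5} (hτ : IsPointReflection τ f) :
    ∃ t : P, ∀ i ≠ f, t • x i = x (τ i) := by
  obtain ⟨a, b, hnodup, hcover⟩ := hτ.exists_pairs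
  have hτ' (i) : τ (τ i) = i := Perm.ext_iff.mp hτ.1 i
  obtain ⟨t, h₁, h₂, h₃, h₄⟩ := hP _ _ _ _ (hnodup.map hx)
  refine ⟨t, fun i hi ↦ ?_⟩
  have := hcover i hi
  simp only [List.mem_cons, List.not_mem_nil, or_false] at this
  rcases this with rfl | rfl | rfl | rfl <;> simp only [*]

section FivePoints

variable {S : Set X} (e : Fin 5 ≃ S)

lemma labelPermHom_injective (hP : TrivialTripleStabilizers P X) :
    Function.Injective (labelPermHom (P := P) e) := by
  intro g h hgh
  refine Subtype.ext (hP.eq_of_forall_smul_eq (Subtype.val_injective.comp e.injective) 0 0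
    fun i _ _ ↦ ?_)
  simp only [Function.comp_apply, ← coe_labelPermHom_apply, hgh]

lemma not_isSwap_of_mem_range_labelPermHom (hP : TrivialTripleStabilizers P X)
    {σ : Perm (Fin 5)} (hσ : σ ∈ (labelPermHom (P := P) e).range) : ¬σ.IsSwap := by
  rintro ⟨a, b, hab, rfl⟩
  obtain ⟨g, hg⟩ := (mem_range_labelPermHom e).mp hσ
  have hg1 : g = 1 := hP.eq_of_forall_smul_eq (Subtype.val_injective.comp e.injective) a b
    fun i ha hb ↦ by simp [hg, swap_apply_of_ne_of_ne ha hb]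
  have hab' : (e a : X) = e b := by simpa [hg1] using hg a
  exact hab (e.injective (Subtype.ext hab'))

lemma mem_range_labelPermHom_of_fixes {t : P} {τ : Perm (Fin 5)} {f : Fin 5}
    (hτ : IsPointReflection τ f) (ht : ∀ i ≠ f, t • (e i : X) = e (τ i))
    (hf : t • (e f : X) = e f) : τ ∈ (labelPermHom (P := P) e).range := by
  refine (mem_range_labelPermHom e).mpr ⟨t, fun i ↦ ?_⟩
  rcases eq_or_ne i f with rfl | hi
  · rw [hf, (hτ.2 i).mpr rfl]
  · exact ht i hi

-- The element `t` inducing `τ` off `f` commutes with the involution `g` inducing `σ`, so it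
-- preserves the unique fixed point of `g`.
lemma mem_range_labelPermHom_of_common_fixedPoint (hP₁ : TrivialTripleStabilizers P X)
    (hP₂ : ExchangesPairs P X) (hP₃ : InvolutionsFixAtMostOne P X) {σ τ : Perm (Fin 5)}
    {f : Fin 5} (hσ : σ ∈ (labelPermHom (P := P) e).range) (hσf : IsPointReflection σ f)
    (hτf : IsPointReflection τ f) : τ ∈ (labelPermHom (P := P) e).range := by
  have hx : Function.Injective fun i ↦ (e i : X) := Subtype.val_injective.comp e.injective
  obtain ⟨g, hg⟩ := (mem_range_labelPermHom e).mp hσ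
  obtain ⟨t, ht⟩ := hP₂.exists_smul_eq hx hτf
  refine mem_range_labelPermHom_of_fixes e hτf ht ?_
  have hσ_ne {i} (hi : i ≠ f) : σ i ≠ f := fun h ↦ hi <|
    σ.injective (h.trans ((hσf.2 f).mpr rfl).symm)
  have hcomm : g * t = t * g := hP₁.eq_of_forall_smul_eq hx f f fun i hi _ ↦ by
    rw [mul_smul, mul_smul, ht i hi, hg, hg, ht _ (hσ_ne hi), ← Perm.mul_apply,
      ← Perm.mul_apply, hσf.mul_comm hτf]
  have hgg : g * g = 1 := hP₁.eq_of_forall_smul_eq hx f f fun i _ _ ↦ by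
    rw [mul_smul, hg, hg, ← Perm.mul_apply, hσf.1, Perm.one_apply, one_smul]
  have hg1 : g ≠ 1 := by
    rintro rfl
    obtain ⟨i, hi⟩ := exists_ne f
    exact hi ((hσf.2 i).mp (hx (by simpa using (hg i).symm)))
  have hgf : g • (e f : X) = e f := by rw [hg, (hσf.2 f).mpr rfl]
  refine hP₃ g hgg hg1 ?_ hgf
  rw [mem_fixedBy, ← mul_smul, hcomm, mul_smul, hgf]

-- The element `t` inducing `τ` off `σ f'` satisfies `g * t * g = t`, as this holds at three points;
-- evaluating at `e f'` shows that `t` fixes `e (σ f')`.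
lemma mem_range_labelPermHom_of_mul_mul_eq (hP₁ : TrivialTripleStabilizers P X)
    (hP₂ : ExchangesPairs P X) {σ τ : Perm (Fin 5)} {f : Fin 5}
    (hσ : σ ∈ (labelPermHom (P := P) e).range) (hσf : σ f ≠ f) (hτf : IsPointReflection τ f)
    (hστ : σ * τ * σ = τ) : τ ∈ (labelPermHom (P := P) e).range := by
  have hx : Function.Injective fun i ↦ (e i : X) := Subtype.val_injective.comp e.injective
  obtain ⟨g, hg⟩ := (mem_range_labelPermHom e).mp hσ
  obtain ⟨t, ht⟩ := hP₂.exists_smul_eq hx hτf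
  refine mem_range_labelPermHom_of_fixes e hτf ht ?_
  obtain ⟨f', rfl⟩ := σ.surjective f
  have hne : f' ≠ σ f' := fun h ↦ hσf (congrArg σ h).symm
  have hστ' (i) : σ (τ (σ i)) = τ i := Perm.ext_iff.mp hστ i
  have hgtg : g * t * g = t := hP₁.eq_of_forall_smul_eq hx (σ f') f' fun i hi hi' ↦ by
    rw [mul_smul, mul_smul, hg, ht _ (σ.injective.ne hi'), hg, hστ', ht i hi]
  refine smul_left_cancel g ?_
  calc g • t • (e (σ f') : X) = (g * t * g) • (e f' : X) := by rw [mul_smul, mul_smul, hg f']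
    _ = e (τ f') := by rw [hgtg, ht f' hne]
    _ = g • (e (σ f') : X) := by rw [hg, ← hστ', (hτf.2 _).mpr rfl]

lemma reflectionClosed_range_labelPermHom (hP₁ : TrivialTripleStabilizers P X)
    (hP₂ : ExchangesPairs P X) (hP₃ : InvolutionsFixAtMostOne P X) :
    ReflectionClosed (labelPermHom (P := P) e).range where
  not_isSwap _ := not_isSwap_of_mem_range_labelPermHom e hP₁
  mem_of_common_fixedPoint _ hσ _ _ :=
    mem_range_labelPermHom_of_common_fixedPoint e hP₁ hP₂ hP₃ hσ
  mem_of_mul_mul_eq _ hσ _ _ := mem_range_labelPermHom_of_mul_mul_eq e hP₁ hP₂ hσ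

end FivePoints

theorem exists_stabilizer_mulEquiv_of_ncard_eq_five (hP₁ : TrivialTripleStabilizers P X)
    (hP₂ : ExchangesPairs P X) (hP₃ : InvolutionsFixAtMostOne P X) {S : Set X}
    (hS : S.ncard = 5) :
    ∃ H : Subgroup (Perm (Fin 5)), Nonempty (stabilizer P S ≃* H) ∧
      (H = ⊥ ∨ IsKleinFour H ∨ H = alternatingGroup (Fin 5)) := by
  have : Finite S := Set.finite_of_ncard_ne_zero (by omega)
  let e : Fin 5 ≃ S := (Finite.equivFinOfCardEq hS).symm
  exact ⟨_, ⟨MonoidHom.ofInjective (labelPermHom_injective e hP₁)⟩,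
    (reflectionClosed_range_labelPermHom e
      hP₁ hP₂ hP₃).eq_bot_or_isKleinFour_or_eq_alternatingGroup⟩

end Action

section ProjectiveLine

open Matrix

open scoped LinearAlgebra.Projectivization

variable {k : Type*} [Field k]

/-- The determinant of two vectors of `k²`; it vanishes exactly when they are proportional. -/
def bracket (v w : Fin 2 → k) : k := v 0 * w 1 - v 1 * w 0

lemma linearIndependent_pair_iff_bracket_ne_zero {v w : Fin 2 → k} :
    LinearIndependent k ![v, w] ↔ bracket v w ≠ 0 := by
  have := linearIndependent_rows_iff_isUnit (A := Matrix.of ![v, w])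
  rw [isUnit_iff_isUnit_det, isUnit_iff_ne_zero, det_fin_two] at this
  exact this

lemma linearIndependent_rep_of_ne {x y : ℙ k (Fin 2 → k)} (hxy : x ≠ y) :
    LinearIndependent k ![x.rep, y.rep] := by
  rwa [← Projectivization.independent_mk_iff_LinearIndependent x.rep_nonzero y.rep_nonzero,
    Projectivization.mk_rep, Projectivization.mk_rep, Projectivization.independent_pair_iff_ne]

lemma mk_smul_eq (A : GL (Fin 2) k) (x : ℙ k (Fin 2 → k)) :
    ∃ h, (QuotientGroup.mk A : GL (Fin 2) k ⧸ scalarSubgroup2 k) • x =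
      Projectivization.mk k (A.1 *ᵥ x.rep) h := by
  have h := glActionP1_smul_mk A x.rep x.rep_nonzero
  rw [Projectivization.mk_rep] at h
  exact ⟨_, h⟩

lemma mk_smul_eq_iff_bracket (A : GL (Fin 2) k) (x y : ℙ k (Fin 2 → k)) :
    (QuotientGroup.mk A : GL (Fin 2) k ⧸ scalarSubgroup2 k) • x = y ↔
      bracket (A.1 *ᵥ x.rep) y.rep = 0 := by
  obtain ⟨h, hA⟩ := mk_smul_eq A x
  rw [hA, ← not_iff_not, ← ne_eq (bracket _ _), ← linearIndependent_pair_iff_bracket_ne_zero,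
    ← Projectivization.independent_mk_iff_LinearIndependent h y.rep_nonzero,
    Projectivization.independent_pair_iff_ne, Projectivization.mk_rep]

lemma exists_hasEigenvector_of_mk_smul_eq_self {A : GL (Fin 2) k} {x : ℙ k (Fin 2 → k)}
    (hx : (QuotientGroup.mk A : GL (Fin 2) k ⧸ scalarSubgroup2 k) • x = x) :
    ∃ c, Module.End.HasEigenvector (toLin' A.1) c x.rep := by
  obtain ⟨h, hA⟩ := mk_smul_eq A x
  rw [hA] at hx
  nth_rw 2 [← x.mk_rep] at hx
  obtain ⟨c, hc⟩ := (Projectivization.mk_eq_mk_iff' k _ _ h x.rep_nonzero).mp hx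
  exact ⟨c, Module.End.mem_eigenspace_iff.mpr hc.symm, x.rep_nonzero⟩

lemma mk_eq_one_iff_exists_scalar (A : GL (Fin 2) k) :
    (QuotientGroup.mk A : GL (Fin 2) k ⧸ scalarSubgroup2 k) = 1 ↔
      ∃ c : k, toLin' A.1 = algebraMap k _ c := by
  rw [QuotientGroup.eq_one_iff]
  constructor
  · rintro ⟨c, rfl⟩
    exact ⟨c, by ext; simp [algebraMap_eq_diagonal, mulVec_diagonal]⟩
  · rintro ⟨c, hc⟩
    have hA : A.1 = algebraMap k _ c := toLin'.injective <| by
      rw [hc]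
      ext
      simp [algebraMap_eq_diagonal, mulVec_diagonal]
    have hc0 : c ≠ 0 := by
      rintro rfl
      exact A.ne_zero (by rw [hA, map_zero])
    exact ⟨Units.mk0 c hc0, Units.ext hA.symm⟩

lemma mk_eq_one_of_hasEigenvector {A : GL (Fin 2) k} {x y : ℙ k (Fin 2 → k)} (hxy : x ≠ y) {c : k}
    (hx : Module.End.HasEigenvector (toLin' A.1) c x.rep)
    (hy : Module.End.HasEigenvector (toLin' A.1) c y.rep) :
    (QuotientGroup.mk A : GL (Fin 2) k ⧸ scalarSubgroup2 k) = 1 := by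
  have hspan := (linearIndependent_rep_of_ne hxy).span_eq_top_of_card_eq_finrank (by simp)
  refine (mk_eq_one_iff_exists_scalar A).mpr ⟨c, LinearMap.ext_on_range hspan fun i ↦ ?_⟩
  fin_cases i
  exacts [hx.apply_eq_smul, hy.apply_eq_smul]

-- Three eigenvectors in a plane cannot have pairwise distinct eigenvalues.
lemma trivialTripleStabilizers_projectiveLine :
    TrivialTripleStabilizers (GL (Fin 2) k ⧸ scalarSubgroup2 k) (ℙ k (Fin 2 → k)) := by
  intro g x hx hfix
  induction g using QuotientGroup.induction_on with | H A
  choose c hc using fun i ↦ exists_hasEigenvector_of_mk_smul_eq_self (hfix i)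
  have hc_inj : ¬Function.Injective c := fun hinj ↦ by
    have hli := Module.End.eigenvectors_linearIndependent' (toLin' A.1) c hinj _ hc
    simpa using hli.fintype_card_le_finrank
  obtain ⟨i, j, hij, hne⟩ : ∃ i j, c i = c j ∧ i ≠ j := by
    simpa [Function.Injective] using hc_inj
  exact mk_eq_one_of_hasEigenvector (hx.ne hne) (hc i) (hij ▸ hc j)

-- Two eigenvalues of an involution in `PGL₂(k)` have the same square, so agree in characteristic 2.
lemma involutionsFixAtMostOne_projectiveLine [CharP k 2] :
    InvolutionsFixAtMostOne (GL (Fin 2) k ⧸ scalarSubgroup2 k) (ℙ k (Fin 2 → k)) := by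
  intro g hgg hg x hx y hy
  induction g using QuotientGroup.induction_on with | H A
  by_contra hxy
  obtain ⟨a, ha⟩ := exists_hasEigenvector_of_mk_smul_eq_self hx
  obtain ⟨b, hb⟩ := exists_hasEigenvector_of_mk_smul_eq_self hy
  rw [← QuotientGroup.mk_mul, mk_eq_one_iff_exists_scalar] at hgg
  obtain ⟨d, hd⟩ := hgg
  have hsq {z : ℙ k (Fin 2 → k)} {c : k}
      (hz : Module.End.HasEigenvector (toLin' A.1) c z.rep) : c ^ 2 = d := by
    refine smul_left_injective k z.rep_nonzero ?_
    have := LinearMap.congr_fun hd z.rep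
    rw [Units.val_mul, toLin'_mul, LinearMap.comp_apply, hz.apply_eq_smul, map_smul,
      hz.apply_eq_smul, smul_smul, ← sq, Module.algebraMap_end_apply] at this
    exact this
  have hab : a = b := CharTwo.sq_injective ((hsq ha).trans (hsq hb).symm)
  exact hg (mk_eq_one_of_hasEigenvector hxy ha (hab ▸ hb))

/-- The endomorphism `x ↦ t ⟨a, x⟩ a - s ⟨b, x⟩ b` of `k²`, where `⟨ , ⟩` is `bracket`. It exchanges
the lines spanned by `a` and `b`. -/
def exchangeMatrix (a b : Fin 2 → k) (s t : k) : Matrix (Fin 2) (Fin 2) k :=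
  t • vecMulVec a ![-a 1, a 0] - s • vecMulVec b ![-b 1, b 0]

lemma exchangeMatrix_mulVec (a b : Fin 2 → k) (s t : k) (x : Fin 2 → k) :
    exchangeMatrix a b s t *ᵥ x = (t * bracket a x) • a - (s * bracket b x) • b := by
  ext i
  simp only [exchangeMatrix, bracket, sub_mulVec, smul_mulVec, vecMulVec_mulVec, Pi.sub_apply,
    Pi.smul_apply, smul_eq_mul, MulOpposite.smul_eq_mul_unop, MulOpposite.unop_op, vec2_dotProduct,
    cons_val_zero, cons_val_one]
  ring

lemma det_exchangeMatrix (a b : Fin 2 → k) (s t : k) :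
    (exchangeMatrix a b s t).det = -(s * t * bracket a b ^ 2) := by
  simp only [exchangeMatrix, bracket, det_fin_two, Matrix.sub_apply, Matrix.smul_apply,
    vecMulVec_apply, smul_eq_mul, cons_val_zero, cons_val_one]
  ring

-- The scalars `s` and `t` are chosen so that `exchangeMatrix` sends `c` to `d`; the map is an
-- involution of the line, having trace zero, and so sends `d` back to `c`.
lemma exchangesPairs_projectiveLine :
    ExchangesPairs (GL (Fin 2) k ⧸ scalarSubgroup2 k) (ℙ k (Fin 2 → k)) := by
  intro a b c d hnodup
  have hbracket {x y : ℙ k (Fin 2 → k)} (hxy : x ≠ y) : bracket x.rep y.rep ≠ 0 :=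
    linearIndependent_pair_iff_bracket_ne_zero.mp (linearIndependent_rep_of_ne hxy)
  obtain ⟨⟨hab, hac, had⟩, ⟨hbc, hbd⟩, -⟩ : (a ≠ b ∧ a ≠ c ∧ a ≠ d) ∧ (b ≠ c ∧ b ≠ d) ∧ c ≠ d := by
    simpa using hnodup
  let M := exchangeMatrix a.rep b.rep (bracket a.rep c.rep * bracket a.rep d.rep)
    (bracket b.rep c.rep * bracket b.rep d.rep)
  have hdet : M.det ≠ 0 := by
    rw [det_exchangeMatrix]
    simp [hbracket hab, hbracket hac, hbracket had, hbracket hbc, hbracket hbd]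
  refine ⟨QuotientGroup.mk (GeneralLinearGroup.mkOfDetNeZero M hdet), ?_, ?_, ?_, ?_⟩ <;>
  · rw [mk_smul_eq_iff_bracket]
    change bracket (M *ᵥ _) _ = 0
    rw [exchangeMatrix_mulVec]
    simp only [bracket, Pi.sub_apply, Pi.smul_apply, smul_eq_mul]
    ring

end ProjectiveLine

theorem stmt19_general {k : Type*} [Field k] [CharP k 2]
    (S : Set (Projectivization k (Fin 2 → k))) (hS5 : S.ncard = 5) :
    Finite (MulAction.stabilizer (GL (Fin 2) k ⧸ scalarSubgroup2 k) S) ∧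
    (Nonempty ((MulAction.stabilizer (GL (Fin 2) k ⧸ scalarSubgroup2 k) S) ≃*
        PUnit) ∨
     Nonempty ((MulAction.stabilizer (GL (Fin 2) k ⧸ scalarSubgroup2 k) S) ≃*
        Multiplicative (ZMod 2 × ZMod 2)) ∨
     Nonempty ((MulAction.stabilizer (GL (Fin 2) k ⧸ scalarSubgroup2 k) S) ≃*
        alternatingGroup (Fin 5))) := by
  obtain ⟨H, ⟨φ⟩, hH⟩ := exists_stabilizer_mulEquiv_of_ncard_eq_five
    trivialTripleStabilizers_projectiveLine exchangesPairs_projectiveLine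
    involutionsFixAtMostOne_projectiveLine hS5
  refine ⟨.of_injective φ φ.injective, ?_⟩
  rcases hH with rfl | hKlein | rfl
  · exact .inl ⟨φ.trans .ofUnique⟩
  · obtain ⟨ψ⟩ := IsKleinFour.nonempty_mulEquiv (G₁ := H) (G₂ := Multiplicative (ZMod 2 × ZMod 2))
    exact .inr (.inl ⟨φ.trans ψ⟩)
  · exact .inr (.inr ⟨φ⟩)

/-- In characteristic 2, the stabilizer in `PGL₂(k)` of a set
of 5 points of `ℙ¹(k)` is a finite group isomorphic to exactly one of: the
trivial group, the Klein four-group, or the alternating group `A₅`. -/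
theorem stmt19 {k : Type*} [Field k] [IsAlgClosed k] (hchar : ringChar k = 2)
    (S : Set (Projectivization k (Fin 2 → k))) (hS : S.Finite)
    (hS5 : S.ncard = 5) :
    Finite (MulAction.stabilizer (GL (Fin 2) k ⧸ scalarSubgroup2 k) S) ∧
    (Nonempty ((MulAction.stabilizer (GL (Fin 2) k ⧸ scalarSubgroup2 k) S) ≃*
        PUnit) ∨
     Nonempty ((MulAction.stabilizer (GL (Fin 2) k ⧸ scalarSubgroup2 k) S) ≃*
        Multiplicative (ZMod 2 × ZMod 2)) ∨
     Nonempty ((MulAction.stabilizer (GL (Fin 2) k ⧸ scalarSubgroup2 k) S) ≃*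
        alternatingGroup (Fin 5))) := by
  have : CharP k 2 := ringChar.of_eq hchar
  exact stmt19_general S hS5
end
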